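/- arXiv:2204.05014 — 8 statements merged into one kernel-verified Lean document; each statement's English description precedes it below -/
import Mathlib

section
/- Let p_1, …, p_r be primes such that for each 1 ≤ i ≤ r there are integers a_i, b_i with p_i = a_i² + b_i² ≡ 1 (mod 8) and both a_i + b_i and a_i − b_i congruent to 1 or −1 modulo 8; let p_{r+1}, …, p_{r+s} be primes each congruent to 7 (mod 8); let q_1, …, q_t be distinct primes each congruent to 3 (mod 8); and let k_1, …, k_{r+s} be non-negative integers. Then neither 64 · p_1^{k_1} ⋯ p_{r+s}^{k_{r+s}} nor 64 · p_1^{k_1} ⋯ p_{r+s}^{k_{r+s}} · q_1 ⋯ q_t belongs to S(16). -/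
open Complex Finset

noncomputable def zeta16 : ℂ := Complex.exp (2 * Real.pi * Complex.I / 16)

noncomputable def fpoly (a : Fin 16 → ℤ) (x : ℂ) : ℂ := ∑ k : Fin 16, (a k : ℂ) * x ^ (k : ℕ)

noncomputable def Nprod (a : Fin 16 → ℤ) (d : ℕ) : ℂ :=
  ∏ l ∈ Finset.filter (fun l => Nat.gcd l 16 = d) (Finset.range 16), fpoly a (zeta16 ^ l)

def circMatrix (a : Fin 16 → ℤ) : Matrix (Fin 16) (Fin 16) ℤ := fun i j => a (i - j)

def S16 : Set ℤ := { n | ∃ a : Fin 16 → ℤ, n = (circMatrix a).det }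

def bcoef (a : Fin 16 → ℤ) (k : Fin 16) : ℤ := (a k + a (k + 8)) + (a (k + 4) + a (k + 12))
def ccoef (a : Fin 16 → ℤ) (k : Fin 16) : ℤ := (a k + a (k + 8)) - (a (k + 4) + a (k + 12))
def ecoef (a : Fin 16 → ℤ) (k : Fin 16) : ℤ := a k - a (k + 8)

/-- `x` is congruent to `1` or `-1` modulo `8`. -/
def Pm (x : ℤ) : Prop := x % 8 = 1 ∨ x % 8 = 7

/-- The admissible primes: `7 mod 8`, or `a² + b²` with `a ± b ≡ ±1 mod 8`. -/
def Adm (l : ℕ) : Prop :=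
  l % 8 = 7 ∨ ∃ a b : ℤ, (l : ℤ) = a ^ 2 + b ^ 2 ∧ Pm (a + b) ∧ Pm (a - b)

/-- The condition on the odd part. -/
def Okm (m : ℕ) : Prop :=
  ∀ l : ℕ, l.Prime → l ∣ m → Adm l ∨ (l % 8 = 3 ∧ ¬ l ^ 2 ∣ m)

lemma Okm.of_dvd {m n : ℕ} (h : Okm m) (hd : n ∣ m) : Okm n := by
  intro l hl hln
  rcases h l hl (hln.trans hd) with h | ⟨h1, h2⟩
  · exact Or.inl h
  · exact Or.inr ⟨h1, fun h3 => h2 (h3.trans hd)⟩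

lemma Pm.neg {x : ℤ} (h : Pm x) : Pm (-x) := by
  unfold Pm at *; omega

lemma Pm.mul {x y : ℤ} (hx : Pm x) (hy : Pm y) : Pm (x * y) := by
  unfold Pm at *
  rw [Int.mul_emod]
  rcases hx with hx | hx <;> rcases hy with hy | hy <;> rw [hx, hy] <;> norm_num

lemma pm_comb {a b u v : ℤ} (h1 : Pm (a + b)) (h2 : Pm (a - b)) (hu : Pm u) (hv : Pm v) :
    Pm (u * a + v * b) := by
  have hva : (u * a + v * b) % 8 = ((u % 8) * a + (v % 8) * b) % 8 := by
    rw [Int.add_emod, Int.mul_emod u, Int.mul_emod v]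
    conv_rhs => rw [Int.add_emod, Int.mul_emod, Int.mul_emod (v % 8)]
    simp
  unfold Pm at *
  rw [hva]
  rcases hu with hu | hu <;> rcases hv with hv | hv <;> rw [hu, hv] <;> omega

lemma dvd_of_three_mod_four {l : ℕ} (hl : l.Prime) (h3 : l % 4 = 3) {u v : ℤ}
    (h : (l : ℤ) ∣ u ^ 2 + v ^ 2) : (l : ℤ) ∣ u ∧ (l : ℤ) ∣ v := by
  have : Fact l.Prime := ⟨hl⟩
  have key : ∀ u v : ℤ, (l : ℤ) ∣ u ^ 2 + v ^ 2 → (l : ℤ) ∣ v := by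
    intro u v h
    by_contra hv
    have h0 : ((u : ZMod l)) ^ 2 + (v : ZMod l) ^ 2 = 0 := by
      have := (ZMod.intCast_zmod_eq_zero_iff_dvd _ l).2 h
      push_cast at this; exact this
    have hv0 : (v : ZMod l) ≠ 0 := by
      intro h; exact hv ((ZMod.intCast_zmod_eq_zero_iff_dvd _ l).1 h)
    have : ((u : ZMod l) / v) ^ 2 = -1 := by
      field_simp
      linear_combination h0
    exact ZMod.mod_four_ne_three_of_sq_eq_neg_one this h3
  exact ⟨key v u (by rwa [add_comm]), key u v h⟩

lemma sq_dvd_of_three {l n : ℕ} (hl : l.Prime) (h3 : l % 4 = 3) {u v : ℤ}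
    (h : u ^ 2 + v ^ 2 = 2 * n) (hd : l ∣ n) :
    ∃ u' v' : ℤ, ∃ n' : ℕ, u = l * u' ∧ v = l * v' ∧ n = l ^ 2 * n' ∧
      u' ^ 2 + v' ^ 2 = 2 * n' := by
  obtain ⟨⟨u', hu⟩, ⟨v', hv⟩⟩ := dvd_of_three_mod_four hl h3 (u := u) (v := v)
    (by rw [h]; exact Dvd.dvd.mul_left (by exact_mod_cast hd) _)
  have hcop : Nat.Coprime (l ^ 2) 2 := by
    apply Nat.Coprime.pow_left
    rw [Nat.coprime_primes hl Nat.prime_two]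
    omega
  have h2 : (l ^ 2) ∣ 2 * n := by
    have : ((l ^ 2 : ℕ) : ℤ) ∣ ((2 * n : ℕ) : ℤ) := by
      refine ⟨u' ^ 2 + v' ^ 2, ?_⟩
      push_cast
      rw [← h, hu, hv]; ring
    exact_mod_cast this
  obtain ⟨n', hn⟩ := hcop.dvd_of_dvd_mul_left h2
  refine ⟨u', v', n', hu, hv, hn, ?_⟩
  have hl0 : ((l : ℤ) ^ 2) ≠ 0 := by
    have := hl.pos
    positivity
  apply mul_left_cancel₀ hl0
  have : (n : ℤ) = l ^ 2 * n' := by exact_mod_cast hn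
  rw [hu, hv, this] at h
  linear_combination h

lemma pm_of_sum_sq (n : ℕ) : 0 < n → Okm n → ∀ u v : ℤ, u ^ 2 + v ^ 2 = 2 * n →
    Pm u ∧ Pm v := by
  induction n using Nat.strong_induction_on with
  | _ n ih =>
  intro hn hok u v huv
  by_cases h1 : n = 1
  · subst h1
    push_cast at huv
    have hu : u ^ 2 ≤ 2 := by nlinarith [sq_nonneg v]
    have hv : v ^ 2 ≤ 2 := by nlinarith [sq_nonneg u]
    have hu1 : u ≤ 1 := by nlinarith
    have hu2 : -1 ≤ u := by nlinarith
    have hv1 : v ≤ 1 := by nlinarith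
    have hv2 : -1 ≤ v := by nlinarith
    unfold Pm
    interval_cases u <;> interval_cases v <;> simp_all
  · obtain ⟨l, hl, hln⟩ := Nat.exists_prime_and_dvd h1
    rcases hok l hl hln with hA | ⟨h3, hnd⟩
    · rcases hA with h7 | ⟨a, b, hab, hs, hd⟩
      · obtain ⟨u', v', n', hu, hv, hn', huv'⟩ := sq_dvd_of_three hl (by omega) huv hln
        have hn0 : 0 < n' := by
          rcases Nat.eq_zero_or_pos n' with h | h
          · subst h; omega
          · exact h
        have hlt : n' < n := by
          rw [hn']; have := hl.two_le; have : 4 ≤ l ^ 2 := by nlinarith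
          nlinarith
        obtain ⟨k1, k2⟩ := ih n' hlt hn0 (hok.of_dvd (by rw [hn']; exact Dvd.intro_left _ rfl)) u' v' huv'
        have hlp : Pm (l : ℤ) := by unfold Pm; omega
        rw [hu, hv]
        exact ⟨hlp.mul k1, hlp.mul k2⟩
      · -- the descent step
        have hlz : Prime (l : ℤ) := Nat.prime_iff_prime_int.1 hl
        have hl0 : (l : ℤ) ≠ 0 := hlz.ne_zero
        obtain ⟨n', hn'⟩ := hln
        have hn0 : 0 < n' := by
          rcases Nat.eq_zero_or_pos n' with h | h
          · subst h; omega
          · exact h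
        have hlt : n' < n := by
          rw [hn']; have := hl.two_le; nlinarith
        have hnz : (n : ℤ) = l * n' := by exact_mod_cast hn'
        have step : ∀ a b : ℤ, (l : ℤ) = a ^ 2 + b ^ 2 → Pm (a + b) → Pm (a - b) →
            (l : ℤ) ∣ u * b - v * a → Pm u ∧ Pm v := by
          intro a b hab hs hd hdiv
          obtain ⟨v', hv'⟩ := hdiv
          have h2 : (l : ℤ) ∣ u * a + v * b := by
            apply hlz.dvd_of_dvd_pow (n := 2)
            refine ⟨l * (2 * n') - l * v' ^ 2, ?_⟩
            have e1 : (u * a + v * b) ^ 2 = (u ^ 2 + v ^ 2) * (a ^ 2 + b ^ 2) - (u * b - v * a) ^ 2 := by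
              ring
            rw [e1, huv, ← hab, hv', hnz]; ring
          obtain ⟨u', hu'⟩ := h2
          have eu : u = u' * a + v' * b := by
            apply mul_left_cancel₀ hl0
            linear_combination a * hu' + b * hv' + u * hab
          have ev : v = u' * b - v' * a := by
            apply mul_left_cancel₀ hl0
            linear_combination b * hu' - a * hv' + v * hab
          have e2 : u' ^ 2 + v' ^ 2 = 2 * n' := by
            apply mul_left_cancel₀ hl0
            rw [eu, ev, hnz] at huv
            rw [hab] at huv ⊢
            linear_combination huv
          obtain ⟨k1, k2⟩ := ih n' hlt hn0 (hok.of_dvd (by rw [hn']; exact Dvd.intro_left _ rfl)) u' v' e2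
          constructor
          · rw [eu]; exact pm_comb hs hd k1 k2
          · have e3 : v = (-v') * a + u' * b := by rw [ev]; ring
            rw [e3]; exact pm_comb hs hd k2.neg k1
        have hprod : (l : ℤ) ∣ (u * b - v * a) * (u * b - v * (-a)) := by
          refine ⟨b ^ 2 * (2 * n') - v ^ 2, ?_⟩
          have : (u * b - v * a) * (u * b - v * (-a)) = b ^ 2 * (u ^ 2 + v ^ 2) - v ^ 2 * (a ^ 2 + b ^ 2) := by
            ring
          rw [this, huv, ← hab, hnz]; ring
        rcases hlz.dvd_or_dvd hprod with h | h
        · exact step a b hab hs hd h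
        · refine step (-a) b (by rw [hab]; ring) ?_ ?_ h
          · have : -a + b = -(a - b) := by ring
            rw [this]; exact hd.neg
          · have : -a - b = -(a + b) := by ring
            rw [this]; exact hs.neg
    · obtain ⟨u', v', n', hu, hv, hn', huv'⟩ := sq_dvd_of_three hl (by omega) huv hln
      exact absurd ⟨n', hn'⟩ hnd

/-! ### The determinant -/

lemma zeta16_prim : IsPrimitiveRoot zeta16 16 := by
  have := Complex.isPrimitiveRoot_exp 16 (by norm_num)
  simpa [zeta16] using this

lemma circ_det_prod (a : Fin 16 → ℤ) :
    (((circMatrix a).det : ℤ) : ℂ) = ∏ j : Fin 16, fpoly a (zeta16 ^ (j : ℕ)) := by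
  set V : Matrix (Fin 16) (Fin 16) ℂ := Matrix.vandermonde (fun j : Fin 16 => zeta16 ^ (j : ℕ)) with hV
  have hz : zeta16 ^ 16 = 1 := zeta16_prim.pow_eq_one
  have hVdet : V.det ≠ 0 := by
    rw [hV, Matrix.det_vandermonde_ne_zero_iff]
    intro i j hij
    exact Fin.ext (zeta16_prim.pow_inj i.2 j.2 hij)
  have hmul : V * (circMatrix a).map (Int.cast : ℤ → ℂ) =
      Matrix.diagonal (fun j : Fin 16 => fpoly a (zeta16 ^ (j : ℕ))) * V := by
    ext i j
    rw [Matrix.diagonal_mul, Matrix.mul_apply]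
    simp only [hV, Matrix.vandermonde_apply, Matrix.map_apply, circMatrix, fpoly]
    rw [Finset.sum_mul]
    rw [← Equiv.sum_comp (Equiv.addRight j)]
    apply Finset.sum_congr rfl
    intro x _
    simp only [Equiv.coe_addRight, add_sub_cancel_right]
    have hp : (zeta16 ^ (i : ℕ)) ^ ((x + j : Fin 16) : ℕ) = (zeta16 ^ (i : ℕ)) ^ ((x : ℕ) + (j : ℕ)) := by
      rw [Fin.val_add]
      apply (pow_eq_pow_mod _ _).symm
      rw [← pow_mul, mul_comm, pow_mul, hz, one_pow]
    rw [hp, pow_add]; ring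
  have hdet := congrArg Matrix.det hmul
  rw [Matrix.det_mul, Matrix.det_mul, Matrix.det_diagonal, mul_comm] at hdet
  have h2 := mul_right_cancel₀ hVdet hdet
  rw [← h2]
  exact Int.cast_det (circMatrix a)


lemma zeta16_four : zeta16 ^ 4 = Complex.I := by
  have h : ((4 : ℕ) : ℂ) * (2 * Real.pi * Complex.I / 16) = Real.pi / 2 * Complex.I := by
    push_cast; ring
  rw [zeta16, ← Complex.exp_nat_mul, h, Complex.exp_pi_div_two_mul_I]

/-- A cubic with integer coefficients. -/
noncomputable def cub (x : Fin 4 → ℤ) (z : ℂ) : ℂ :=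
  (x 0 : ℂ) + x 1 * z + x 2 * z ^ 2 + x 3 * z ^ 3

noncomputable def pv (A B C D : Fin 4 → ℤ) (z : ℂ) : ℂ :=
  cub A z ^ 2 + z * cub B z ^ 2 - 2 * z * cub C z * cub D z

noncomputable def qv (A B C D : Fin 4 → ℤ) (z : ℂ) : ℂ :=
  2 * cub A z * cub B z - cub C z ^ 2 - z * cub D z ^ 2

lemma fpoly_cub (a : Fin 16 → ℤ) (w : ℂ) : fpoly a w =
    cub ![a 0, a 4, a 8, a 12] (w ^ 4) + w ^ 2 * cub ![a 2, a 6, a 10, a 14] (w ^ 4) +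
    w * cub ![a 1, a 5, a 9, a 13] (w ^ 4) + w ^ 3 * cub ![a 3, a 7, a 11, a 15] (w ^ 4) := by
  simp only [fpoly, cub, Fin.sum_univ_succ]
  simp
  ring

lemma four_prod (a : Fin 16 → ℤ) (A B C D : Fin 4 → ℤ)
    (hf : ∀ w : ℂ, fpoly a w = cub A (w ^ 4) + w ^ 2 * cub B (w ^ 4) +
      w * cub C (w ^ 4) + w ^ 3 * cub D (w ^ 4)) (w z : ℂ) (hw : w ^ 4 = z) :
    fpoly a w * fpoly a (w * zeta16 ^ 4) * fpoly a (w * zeta16 ^ 8) * fpoly a (w * zeta16 ^ 12) =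
      pv A B C D z ^ 2 - z * qv A B C D z ^ 2 := by
  have h4 := zeta16_four
  have h8 : zeta16 ^ 8 = -1 := by
    have : zeta16 ^ 8 = (zeta16 ^ 4) ^ 2 := by ring
    rw [this, h4, Complex.I_sq]
  have h12 : zeta16 ^ 12 = -Complex.I := by
    have : zeta16 ^ 12 = zeta16 ^ 8 * zeta16 ^ 4 := by ring
    rw [this, h4, h8]; ring
  have I2 := Complex.I_sq
  have I3 : Complex.I ^ 3 = -Complex.I := by rw [pow_succ, I2]; ring
  have I4 : Complex.I ^ 4 = 1 := by rw [pow_succ, I3]; linear_combination -I2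
  rw [h4, h8, h12]
  simp only [hf]
  have e1 : (w * Complex.I) ^ 4 = z := by rw [mul_pow, I4, hw, mul_one]
  have e2 : (w * (-1)) ^ 4 = z := by rw [mul_pow, hw]; norm_num
  have e3 : (w * (-Complex.I)) ^ 4 = z := by rw [mul_pow, neg_pow, I4, hw]; norm_num
  rw [e1, e2, e3, hw]
  have f1 : (w * Complex.I) ^ 2 = -w ^ 2 := by rw [mul_pow, I2]; ring
  have f2 : (w * Complex.I) ^ 3 = -w ^ 3 * Complex.I := by rw [mul_pow, I3]; ring
  have f3 : (w * (-Complex.I)) ^ 2 = -w ^ 2 := by rw [mul_pow, neg_sq, I2]; ring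
  have f4 : (w * (-Complex.I)) ^ 3 = w ^ 3 * Complex.I := by
    rw [mul_pow]
    have : (-Complex.I) ^ 3 = -Complex.I ^ 3 := by ring
    rw [this, I3]; ring
  rw [f1, f2, f3, f4]
  unfold pv qv
  generalize cub A z = x
  generalize cub B z = y
  generalize cub C z = u
  generalize cub D z = v
  have g1 : (x + w ^ 2 * y + w * u + w ^ 3 * v) *
      (x + (w * (-1)) ^ 2 * y + w * (-1) * u + (w * (-1)) ^ 3 * v) =
      (x ^ 2 + z * y ^ 2 - 2 * z * u * v) + w ^ 2 * (2 * x * y - u ^ 2 - z * v ^ 2) := by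
    rw [← hw]; ring
  have g2 : (x + -w ^ 2 * y + w * Complex.I * u + -w ^ 3 * Complex.I * v) *
      (x + -w ^ 2 * y + w * (-Complex.I) * u + w ^ 3 * Complex.I * v) =
      (x ^ 2 + z * y ^ 2 - 2 * z * u * v) - w ^ 2 * (2 * x * y - u ^ 2 - z * v ^ 2) := by
    rw [← hw]
    linear_combination (-(w * u - w ^ 3 * v) ^ 2) * I2
  calc _ = ((x + w ^ 2 * y + w * u + w ^ 3 * v) *
      (x + (w * (-1)) ^ 2 * y + w * (-1) * u + (w * (-1)) ^ 3 * v)) *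
      ((x + -w ^ 2 * y + w * Complex.I * u + -w ^ 3 * Complex.I * v) *
      (x + -w ^ 2 * y + w * (-Complex.I) * u + w ^ 3 * Complex.I * v)) := by ring
    _ = _ := by
      rw [g1, g2, ← hw]; ring

/-- Values of cubics at `1`, `-1`, and the two coordinates at `I`. -/
def c1 (x : Fin 4 → ℤ) : ℤ := x 0 + x 1 + x 2 + x 3
def cm (x : Fin 4 → ℤ) : ℤ := x 0 - x 1 + x 2 - x 3
def cr (x : Fin 4 → ℤ) : ℤ := x 0 - x 2
def ci (x : Fin 4 → ℤ) : ℤ := x 1 - x 3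

def fr (ar ai br bi cr ci dr di : ℤ) : ℤ :=
  ar ^ 2 - ai ^ 2 - 2 * br * bi + 2 * (cr * di + ci * dr)
def fs (ar ai br bi cr ci dr di : ℤ) : ℤ :=
  2 * ar * ai + br ^ 2 - bi ^ 2 - 2 * (cr * dr - ci * di)
def ft (ar ai br bi cr ci dr di : ℤ) : ℤ :=
  2 * (ar * br - ai * bi) - (cr ^ 2 - ci ^ 2) + 2 * dr * di
def fw (ar ai br bi cr ci dr di : ℤ) : ℤ :=
  2 * (ar * bi + ai * br) - 2 * cr * ci - (dr ^ 2 - di ^ 2)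

def fRe (r s t w : ℤ) : ℤ := r ^ 2 - s ^ 2 + 2 * t * w
def fIm (r s t w : ℤ) : ℤ := 2 * r * s - t ^ 2 + w ^ 2

def eRe (ar ai br bi cr ci dr di : ℤ) : ℤ :=
  fRe (fr ar ai br bi cr ci dr di) (fs ar ai br bi cr ci dr di)
    (ft ar ai br bi cr ci dr di) (fw ar ai br bi cr ci dr di)
def eIm (ar ai br bi cr ci dr di : ℤ) : ℤ :=
  fIm (fr ar ai br bi cr ci dr di) (fs ar ai br bi cr ci dr di)
    (ft ar ai br bi cr ci dr di) (fw ar ai br bi cr ci dr di)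

lemma cub_I (x : Fin 4 → ℤ) : cub x Complex.I = (cr x : ℂ) + ci x * Complex.I := by
  unfold cub cr ci; push_cast
  have I2 := Complex.I_sq
  have I3 : Complex.I ^ 3 = -Complex.I := by rw [pow_succ, I2]; ring
  rw [I2, I3]; ring

lemma cub_negI (x : Fin 4 → ℤ) : cub x (-Complex.I) = (cr x : ℂ) - ci x * Complex.I := by
  unfold cub cr ci; push_cast
  have I2 : (-Complex.I) ^ 2 = -1 := by rw [neg_sq, Complex.I_sq]
  have I3 : (-Complex.I) ^ 3 = Complex.I := by rw [pow_succ, I2]; ring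
  rw [I2, I3]; ring

lemma cub_one (x : Fin 4 → ℤ) : cub x 1 = (c1 x : ℂ) := by
  unfold cub c1; push_cast; ring

lemma cub_neg_one (x : Fin 4 → ℤ) : cub x (-1) = (cm x : ℂ) := by
  unfold cub cm; push_cast; ring

lemma norm_part (ar ai br bi cr ci dr di J : ℂ) (hJ : J ^ 2 = -1) (r s t w : ℂ)
    (hr : r = ar ^ 2 - ai ^ 2 - 2 * br * bi + 2 * (cr * di + ci * dr))
    (hs : s = 2 * ar * ai + br ^ 2 - bi ^ 2 - 2 * (cr * dr - ci * di))
    (ht : t = 2 * (ar * br - ai * bi) - (cr ^ 2 - ci ^ 2) + 2 * dr * di)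
    (hw : w = 2 * (ar * bi + ai * br) - 2 * cr * ci - (dr ^ 2 - di ^ 2)) :
    ((ar + ai * J) ^ 2 + J * (br + bi * J) ^ 2 - 2 * J * (cr + ci * J) * (dr + di * J)) ^ 2 -
    J * (2 * (ar + ai * J) * (br + bi * J) - (cr + ci * J) ^ 2 - J * (dr + di * J) ^ 2) ^ 2
    = (r ^ 2 - s ^ 2 + 2 * t * w) + (2 * r * s - t ^ 2 + w ^ 2) * J := by
  have hJ3 : J ^ 3 = -J := by rw [pow_succ, hJ]; ring
  have h1 : (ar + ai * J) ^ 2 + J * (br + bi * J) ^ 2 - 2 * J * (cr + ci * J) * (dr + di * J)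
      = r + s * J := by
    rw [hr, hs]
    linear_combination (ai ^ 2 + 2 * br * bi - 2 * (cr * di + ci * dr)) * hJ
      + (bi ^ 2 - 2 * ci * di) * hJ3
  have h2 : 2 * (ar + ai * J) * (br + bi * J) - (cr + ci * J) ^ 2 - J * (dr + di * J) ^ 2
      = t + w * J := by
    rw [ht, hw]
    linear_combination (2 * ai * bi - ci ^ 2 - 2 * dr * di) * hJ - di ^ 2 * hJ3
  rw [h1, h2]
  linear_combination (s ^ 2 - 2 * t * w) * hJ - w ^ 2 * hJ3

lemma det_formula (a : Fin 16 → ℤ) : ∃ A B C D : Fin 4 → ℤ, (circMatrix a).det =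
    ((c1 A + c1 B) ^ 2 - (c1 C + c1 D) ^ 2) * ((c1 A - c1 B) ^ 2 + (c1 C - c1 D) ^ 2) *
    ((cm A ^ 2 - cm B ^ 2 + 2 * cm C * cm D) ^ 2 +
      (2 * cm A * cm B - cm C ^ 2 + cm D ^ 2) ^ 2) *
    (eRe (cr A) (ci A) (cr B) (ci B) (cr C) (ci C) (cr D) (ci D) ^ 2 +
      eIm (cr A) (ci A) (cr B) (ci B) (cr C) (ci C) (cr D) (ci D) ^ 2) := by
  obtain ⟨A, B, C, D, hf⟩ : ∃ A B C D : Fin 4 → ℤ,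
      ∀ w : ℂ, fpoly a w = cub A (w ^ 4) + w ^ 2 * cub B (w ^ 4) +
      w * cub C (w ^ 4) + w ^ 3 * cub D (w ^ 4) := ⟨_, _, _, _, fpoly_cub a⟩
  refine ⟨A, B, C, D, ?_⟩
  have I2 := Complex.I_sq
  have h4 := zeta16_four
  have hq := four_prod a A B C D hf
  have q0 := hq 1 1 (by norm_num)
  have q1 := hq zeta16 Complex.I h4
  have q2 := hq (zeta16 ^ 2) (-1) (by
    rw [← pow_mul, mul_comm, pow_mul, h4, I2])
  have q3 := hq (zeta16 ^ 3) (-Complex.I) (by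
    rw [← pow_mul, mul_comm, pow_mul, h4, pow_succ, I2]; ring)
  have n1 := norm_part (cr A) (ci A) (cr B) (ci B) (cr C) (ci C) (cr D) (ci D) Complex.I I2
    _ _ _ _ rfl rfl rfl rfl
  have n3 := norm_part (cr A) (ci A) (cr B) (ci B) (cr C) (ci C) (cr D) (ci D) (-Complex.I)
    (by rw [neg_sq, I2]) _ _ _ _ rfl rfl rfl rfl
  have hdet := circ_det_prod a
  rw [Fin.prod_univ_eq_prod_range (fun k => fpoly a (zeta16 ^ k)) 16] at hdet
  simp only [Finset.prod_range_succ, Finset.prod_range_zero, one_mul] at hdet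
  have p1 : ∀ i j : ℕ, zeta16 ^ i * zeta16 ^ j = zeta16 ^ (i + j) := fun i j => (pow_add _ _ _).symm
  have p0 : ∀ j : ℕ, zeta16 * zeta16 ^ j = zeta16 ^ (1 + j) := fun j => by rw [pow_add, pow_one]
  simp only [one_mul, p1, p0, Nat.reduceAdd] at q0 q1 q2 q3
  simp only [pv, qv, cub_I, cub_negI, cub_one, cub_neg_one] at q0 q1 q2 q3
  have n3' : ∀ x y : ℂ, x - y * Complex.I = x + y * -Complex.I := fun x y => by ring
  simp only [n3'] at q3
  rw [n1] at q1
  rw [n3] at q3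
  apply Int.cast_injective (α := ℂ)
  rw [hdet, pow_zero, pow_one]
  have perm : ∀ x0 x1 x2 x3 x4 x5 x6 x7 x8 x9 xa xb xc xd xe xf : ℂ,
      x0 * x1 * x2 * x3 * x4 * x5 * x6 * x7 * x8 * x9 * xa * xb * xc * xd * xe * xf =
      (x0 * x4 * x8 * xc) * (x1 * x5 * x9 * xd) * (x2 * x6 * xa * xe) * (x3 * x7 * xb * xf) := by
    intros; ring
  rw [perm, q0, q1, q2, q3]
  unfold eRe eIm fRe fIm
  have hr : ((fr (cr A) (ci A) (cr B) (ci B) (cr C) (ci C) (cr D) (ci D) : ℤ) : ℂ) =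
    (cr A : ℂ) ^ 2 - (ci A) ^ 2 - 2 * cr B * ci B + 2 * (cr C * ci D + ci C * cr D) := by
    unfold fr; push_cast; ring
  have hs : ((fs (cr A) (ci A) (cr B) (ci B) (cr C) (ci C) (cr D) (ci D) : ℤ) : ℂ) =
    2 * (cr A : ℂ) * ci A + cr B ^ 2 - ci B ^ 2 - 2 * (cr C * cr D - ci C * ci D) := by
    unfold fs; push_cast; ring
  have ht : ((ft (cr A) (ci A) (cr B) (ci B) (cr C) (ci C) (cr D) (ci D) : ℤ) : ℂ) =
    2 * ((cr A : ℂ) * cr B - ci A * ci B) - (cr C ^ 2 - ci C ^ 2) + 2 * cr D * ci D := by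
    unfold ft; push_cast; ring
  have hw : ((fw (cr A) (ci A) (cr B) (ci B) (cr C) (ci C) (cr D) (ci D) : ℤ) : ℂ) =
    2 * ((cr A : ℂ) * ci B + ci A * cr B) - 2 * cr C * ci C - (cr D ^ 2 - ci D ^ 2) := by
    unfold fw; push_cast; ring
  rw [← hr, ← hs, ← ht, ← hw]
  push_cast
  generalize ((fr (cr A) (ci A) (cr B) (ci B) (cr C) (ci C) (cr D) (ci D) : ℤ) : ℂ) = r
  generalize ((fs (cr A) (ci A) (cr B) (ci B) (cr C) (ci C) (cr D) (ci D) : ℤ) : ℂ) = s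
  generalize ((ft (cr A) (ci A) (cr B) (ci B) (cr C) (ci C) (cr D) (ci D) : ℤ) : ℂ) = t
  generalize ((fw (cr A) (ci A) (cr B) (ci B) (cr C) (ci C) (cr D) (ci D) : ℤ) : ℂ) = w
  have hE : (r ^ 2 - s ^ 2 + 2 * t * w + (2 * r * s - t ^ 2 + w ^ 2) * I) *
      (r ^ 2 - s ^ 2 + 2 * t * w + (2 * r * s - t ^ 2 + w ^ 2) * -I) =
      (r ^ 2 - s ^ 2 + 2 * t * w) ^ 2 + (2 * r * s - t ^ 2 + w ^ 2) ^ 2 := by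
    linear_combination (-(2 * r * s - t ^ 2 + w ^ 2) ^ 2) * I2
  rw [← hE]
  generalize (r ^ 2 - s ^ 2 + 2 * t * w + (2 * r * s - t ^ 2 + w ^ 2) * I) = X
  generalize (r ^ 2 - s ^ 2 + 2 * t * w + (2 * r * s - t ^ 2 + w ^ 2) * -I) = Y
  ring

/-! ### Congruences -/

lemma exists_fin2 (x : ℤ) : ∃ (y : ℤ) (e : Fin 2), x = 2 * y + ((e : ℕ) : ℤ) := by
  rcases Int.emod_two_eq_zero_or_one x with h | h
  · exact ⟨x / 2, 0, by simp; omega⟩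
  · exact ⟨x / 2, 1, by simp; omega⟩

lemma exists_fin4 (x : ℤ) : ∃ (y : ℤ) (e : Fin 4), x = 4 * y + ((e : ℕ) : ℤ) := by
  refine ⟨x / 4, ⟨(x % 4).toNat, by omega⟩, ?_⟩
  simp only
  omega

/-- Parity marker: `x` even contributes its half, an odd `x` contributes `0`. -/
def half (x : ℤ) : ℤ := if x % 4 = 2 then 1 else 0

/-- Parity marker at `I`. -/
def halfI (r i : ℤ) : ℤ := if r % 2 = 1 ∧ i % 2 = 1 then 1 else 0

lemma dec_m : ∀ a b c d : Fin 4,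
    let a : ℤ := ((a : ℕ) : ℤ)
    let b : ℤ := ((b : ℕ) : ℤ)
    let c : ℤ := ((c : ℕ) : ℤ)
    let d : ℤ := ((d : ℕ) : ℤ)
    (a + b) % 2 = 1 → (c + d) % 2 = 1 →
    ((a ^ 2 - b ^ 2 + 2 * c * d) % 8 = 1 ∨ (a ^ 2 - b ^ 2 + 2 * c * d) % 8 = 7) →
    (half a + half b + half c + half d) % 2 = 0 := by
  unfold half
  decide +kernel

lemma dec_I : ∀ ar ai br bi cr ci dr di : Fin 2,
    let ar : ℤ := ((ar : ℕ) : ℤ)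
    let ai : ℤ := ((ai : ℕ) : ℤ)
    let br : ℤ := ((br : ℕ) : ℤ)
    let bi : ℤ := ((bi : ℕ) : ℤ)
    let cr : ℤ := ((cr : ℕ) : ℤ)
    let ci : ℤ := ((ci : ℕ) : ℤ)
    let dr : ℤ := ((dr : ℕ) : ℤ)
    let di : ℤ := ((di : ℕ) : ℤ)
    (ar + ai + br + bi) % 2 = 1 → (cr + ci + dr + di) % 2 = 1 →
    (eRe ar ai br bi cr ci dr di % 8 = 1 ∨ eRe ar ai br bi cr ci dr di % 8 = 7) →
    (halfI ar ai + halfI br bi + halfI cr ci + halfI dr di) % 2 = 0 := by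
  unfold halfI eRe fRe fr fs ft fw
  decide +kernel

lemma half_four (y e : ℤ) : half (4 * y + e) = half e := by
  unfold half
  have : (4 * y + e) % 4 = e % 4 := by omega
  rw [this]

lemma halfI_two (y e y' e' : ℤ) : halfI (2 * y + e) (2 * y' + e') = halfI e e' := by
  unfold halfI
  have h1 : (2 * y + e) % 2 = e % 2 := by omega
  have h2 : (2 * y' + e') % 2 = e' % 2 := by omega
  rw [h1, h2]

lemma cong_m (a b c d : ℤ) (h1 : (a + b) % 2 = 1) (h2 : (c + d) % 2 = 1)
    (h : Pm (a ^ 2 - b ^ 2 + 2 * c * d)) :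
    (half a + half b + half c + half d) % 2 = 0 := by
  obtain ⟨a', ea, rfl⟩ := exists_fin4 a
  obtain ⟨b', eb, rfl⟩ := exists_fin4 b
  obtain ⟨c', ec, rfl⟩ := exists_fin4 c
  obtain ⟨d', ed, rfl⟩ := exists_fin4 d
  have key := dec_m ea eb ec ed
  simp only [half_four]
  apply key
  · omega
  · omega
  · generalize ((ea : ℕ) : ℤ) = ea at *
    generalize ((eb : ℕ) : ℤ) = eb at *
    generalize ((ec : ℕ) : ℤ) = ec at *
    generalize ((ed : ℕ) : ℤ) = ed at *
    have e : (4 * a' + ea) ^ 2 - (4 * b' + eb) ^ 2 + 2 * (4 * c' + ec) * (4 * d' + ed) =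
      8 * (2 * a' ^ 2 + a' * ea - 2 * b' ^ 2 - b' * eb + 4 * c' * d' + c' * ed + d' * ec) +
      (ea ^ 2 - eb ^ 2 + 2 * ec * ed) := by ring
    rw [e] at h
    unfold Pm at h
    omega

lemma fRe_four (r s t w r' s' t' w' : ℤ) (hr : 4 ∣ r - r') (hs : 4 ∣ s - s')
    (ht : 4 ∣ t - t') (hw : 4 ∣ w - w') : fRe r s t w % 8 = fRe r' s' t' w' % 8 := by
  obtain ⟨x, hx⟩ := hr
  obtain ⟨y, hy⟩ := hs
  obtain ⟨z, hz⟩ := ht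
  obtain ⟨k, hk⟩ := hw
  obtain rfl : r = r' + 4 * x := by omega
  obtain rfl : s = s' + 4 * y := by omega
  obtain rfl : t = t' + 4 * z := by omega
  obtain rfl : w = w' + 4 * k := by omega
  have e : fRe (r' + 4 * x) (s' + 4 * y) (t' + 4 * z) (w' + 4 * k) = fRe r' s' t' w' +
    8 * (r' * x + 2 * x ^ 2 - s' * y - 2 * y ^ 2 + t' * k + z * w' + 4 * z * k) := by
    unfold fRe; ring
  rw [e]; omega

lemma cong_I (ar ai br bi cr ci dr di : ℤ) (h1 : (ar + ai + br + bi) % 2 = 1)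
    (h2 : (cr + ci + dr + di) % 2 = 1) (h : Pm (eRe ar ai br bi cr ci dr di)) :
    (halfI ar ai + halfI br bi + halfI cr ci + halfI dr di) % 2 = 0 := by
  obtain ⟨y1, e1, rfl⟩ := exists_fin2 ar
  obtain ⟨y2, e2, rfl⟩ := exists_fin2 ai
  obtain ⟨y3, e3, rfl⟩ := exists_fin2 br
  obtain ⟨y4, e4, rfl⟩ := exists_fin2 bi
  obtain ⟨y5, e5, rfl⟩ := exists_fin2 cr
  obtain ⟨y6, e6, rfl⟩ := exists_fin2 ci
  obtain ⟨y7, e7, rfl⟩ := exists_fin2 dr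
  obtain ⟨y8, e8, rfl⟩ := exists_fin2 di
  have key := dec_I e1 e2 e3 e4 e5 e6 e7 e8
  simp only [halfI_two]
  apply key
  · omega
  · omega
  · generalize ((e1 : ℕ) : ℤ) = e1 at *
    generalize ((e2 : ℕ) : ℤ) = e2 at *
    generalize ((e3 : ℕ) : ℤ) = e3 at *
    generalize ((e4 : ℕ) : ℤ) = e4 at *
    generalize ((e5 : ℕ) : ℤ) = e5 at *
    generalize ((e6 : ℕ) : ℤ) = e6 at *
    generalize ((e7 : ℕ) : ℤ) = e7 at *
    generalize ((e8 : ℕ) : ℤ) = e8 at *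
    unfold Pm eRe at h
    unfold eRe
    rw [fRe_four _ _ _ _ (fr e1 e2 e3 e4 e5 e6 e7 e8) (fs e1 e2 e3 e4 e5 e6 e7 e8)
      (ft e1 e2 e3 e4 e5 e6 e7 e8) (fw e1 e2 e3 e4 e5 e6 e7 e8)] at h
    · exact h
    · refine ⟨y1 ^ 2 + y1 * e1 - y2 ^ 2 - y2 * e2 - 2 * y3 * y4 - y3 * e4 - y4 * e3 +
        2 * y5 * y8 + y5 * e8 + y8 * e5 + 2 * y6 * y7 + y6 * e7 + y7 * e6, ?_⟩
      unfold fr; ring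
    · refine ⟨2 * y1 * y2 + y1 * e2 + y2 * e1 + y3 ^ 2 + y3 * e3 - y4 ^ 2 - y4 * e4 -
        (2 * y5 * y7 + y5 * e7 + y7 * e5) + (2 * y6 * y8 + y6 * e8 + y8 * e6), ?_⟩
      unfold fs; ring
    · refine ⟨2 * y1 * y3 + y1 * e3 + y3 * e1 - (2 * y2 * y4 + y2 * e4 + y4 * e2) -
        (y5 ^ 2 + y5 * e5 - y6 ^ 2 - y6 * e6) + (2 * y7 * y8 + y7 * e8 + y8 * e7), ?_⟩
      unfold ft; ring
    · refine ⟨2 * y1 * y4 + y1 * e4 + y4 * e1 + (2 * y2 * y3 + y2 * e3 + y3 * e2) -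
        (2 * y5 * y6 + y5 * e6 + y6 * e5) - (y7 ^ 2 + y7 * e7 - y8 ^ 2 - y8 * e8), ?_⟩
      unfold fw; ring

lemma half_rel (x : Fin 4 → ℤ) (h : c1 x % 2 = 0) :
    (half (c1 x) + half (cm x) + halfI (cr x) (ci x)) % 2 = 0 := by
  unfold half halfI c1 cm cr ci at *
  generalize x 0 = x0 at *
  generalize x 1 = x1 at *
  generalize x 2 = x2 at *
  generalize x 3 = x3 at *
  split_ifs <;> omega

lemma half_odd (x : Fin 4 → ℤ) (h : c1 x % 2 = 1) :
    half (c1 x) = 0 ∧ half (cm x) = 0 ∧ halfI (cr x) (ci x) = 0 := by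
  unfold half halfI c1 cm cr ci at *
  generalize x 0 = x0 at *
  generalize x 1 = x1 at *
  generalize x 2 = x2 at *
  generalize x 3 = x3 at *
  refine ⟨?_, ?_, ?_⟩ <;> split_ifs <;> omega

lemma half_all (x : Fin 4 → ℤ) :
    (half (c1 x) + half (cm x) + halfI (cr x) (ci x)) % 2 = 0 := by
  rcases Int.emod_two_eq_zero_or_one (c1 x) with h | h
  · exact half_rel x h
  · obtain ⟨h1, h2, h3⟩ := half_odd x h
    rw [h1, h2, h3]; norm_num

lemma sq_mod_sixteen (x : ℤ) (h : x % 8 = 1 ∨ x % 8 = 7) : x ^ 2 % 16 = 1 := by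
  have : x ^ 2 % 16 = (x % 16) ^ 2 % 16 := by
    simp [sq, Int.mul_emod]
  rw [this]
  have h' : x % 16 = 1 ∨ x % 16 = 7 ∨ x % 16 = 9 ∨ x % 16 = 15 := by omega
  rcases h' with h | h | h | h <;> rw [h] <;> norm_num

lemma sq_mod_sixteen' (x : ℤ) (h : x % 8 = 3 ∨ x % 8 = 5) : x ^ 2 % 16 = 9 := by
  have : x ^ 2 % 16 = (x % 16) ^ 2 % 16 := by
    simp [sq, Int.mul_emod]
  rw [this]
  have h' : x % 16 = 3 ∨ x % 16 = 5 ∨ x % 16 = 11 ∨ x % 16 = 13 := by omega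
  rcases h' with h | h | h | h <;> rw [h] <;> norm_num

lemma sum_half (a b : ℤ) (h : Pm (a - b)) :
    (half a + half b = 0 ∧ (a + b) ^ 2 % 16 = 1) ∨
    (half a + half b = 1 ∧ (a + b) ^ 2 % 16 = 9) := by
  have h1 : (a + b) % 8 = 1 ∨ (a + b) % 8 = 7 ∨ (a + b) % 8 = 3 ∨ (a + b) % 8 = 5 := by
    unfold Pm at h; omega
  unfold Pm at h
  rcases h1 with h1 | h1 | h1 | h1
  · left; refine ⟨?_, sq_mod_sixteen _ (by omega)⟩; unfold half; split_ifs <;> omega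
  · left; refine ⟨?_, sq_mod_sixteen _ (by omega)⟩; unfold half; split_ifs <;> omega
  · right; refine ⟨?_, sq_mod_sixteen' _ (by omega)⟩; unfold half; split_ifs <;> omega
  · right; refine ⟨?_, sq_mod_sixteen' _ (by omega)⟩; unfold half; split_ifs <;> omega

lemma local_contra (A B C D : Fin 4 → ℤ) (h1 : (c1 A + c1 B) % 2 = 1)
    (h2 : (c1 C + c1 D) % 2 = 1)
    (hAB : ((c1 A + c1 B) ^ 2 - (c1 C + c1 D) ^ 2) % 16 = 8)
    (hC1 : Pm (c1 A - c1 B)) (hC2 : Pm (c1 C - c1 D))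
    (hD : Pm (cm A ^ 2 - cm B ^ 2 + 2 * cm C * cm D))
    (hE : Pm (eRe (cr A) (ci A) (cr B) (ci B) (cr C) (ci C) (cr D) (ci D))) : False := by
  have p1 : ∀ x : Fin 4 → ℤ, cm x % 2 = c1 x % 2 := by intro x; unfold cm c1; omega
  have p2 : ∀ x : Fin 4 → ℤ, (cr x + ci x) % 2 = c1 x % 2 := by
    intro x; unfold cr ci c1; omega
  have k1 := cong_m _ _ _ _ (by have := p1 A; have := p1 B; omega)
    (by have := p1 C; have := p1 D; omega) hD
  have k2 := cong_I _ _ _ _ _ _ _ _ (by have := p2 A; have := p2 B; omega)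
    (by have := p2 C; have := p2 D; omega) hE
  have a1 := half_all A
  have a2 := half_all B
  have a3 := half_all C
  have a4 := half_all D
  have s1 := sum_half _ _ hC1
  have s2 := sum_half _ _ hC2
  omega

lemma zmod2_eq (x y : ℤ) (h : (x : ZMod 2) = (y : ZMod 2)) : x % 2 = y % 2 :=
  (ZMod.intCast_eq_intCast_iff' x y 2).1 h

lemma parity_E (ar ai br bi cr ci dr di : ℤ) :
    (eRe ar ai br bi cr ci dr di ^ 2 + eIm ar ai br bi cr ci dr di ^ 2) % 2 =
      (ar + ai + br + bi + cr + ci + dr + di) % 2 := by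
  apply zmod2_eq
  unfold eRe eIm fRe fIm fr fs ft fw
  push_cast
  generalize (ar : ZMod 2) = x1
  generalize (ai : ZMod 2) = x2
  generalize (br : ZMod 2) = x3
  generalize (bi : ZMod 2) = x4
  generalize (cr : ZMod 2) = x5
  generalize (ci : ZMod 2) = x6
  generalize (dr : ZMod 2) = x7
  generalize (di : ZMod 2) = x8
  revert x1 x2 x3 x4 x5 x6 x7 x8
  decide +kernel

lemma parity_p (a b c d : ℤ) :
    (a ^ 2 - b ^ 2 + 2 * c * d) % 2 = (a + b) % 2 := by
  apply zmod2_eq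
  push_cast
  generalize (a : ZMod 2) = x1
  generalize (b : ZMod 2) = x2
  generalize (c : ZMod 2) = x3
  generalize (d : ZMod 2) = x4
  revert x1 x2 x3 x4
  decide +kernel

lemma parity_q (a b c d : ℤ) :
    (2 * a * b - c ^ 2 + d ^ 2) % 2 = (c + d) % 2 := by
  apply zmod2_eq
  push_cast
  generalize (a : ZMod 2) = x1
  generalize (b : ZMod 2) = x2
  generalize (c : ZMod 2) = x3
  generalize (d : ZMod 2) = x4
  revert x1 x2 x3 x4
  decide +kernel

lemma parity_sq (x : ℤ) : x ^ 2 % 2 = x % 2 := by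
  apply zmod2_eq
  push_cast
  generalize (x : ZMod 2) = x1
  revert x1
  decide +kernel

lemma even_sq {x : ℤ} (h : x % 2 = 0) : ∃ k, x ^ 2 = 4 * k := by
  obtain ⟨k, rfl⟩ : ∃ k, x = 2 * k := ⟨x / 2, by omega⟩
  exact ⟨k ^ 2, by ring⟩

lemma odd_sq {x : ℤ} (h : x % 2 = 1) : ∃ k, x ^ 2 = 8 * k + 1 := by
  have := Int.sq_mod_four_eq_one_of_odd (Int.odd_iff.2 h)
  have h8 := Int.eight_dvd_sq_sub_one_of_odd (Int.odd_iff.2 h)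
  obtain ⟨k, hk⟩ := h8
  exact ⟨k, by omega⟩

lemma Okm.odd {m : ℕ} (h : Okm m) : m % 2 = 1 := by
  by_contra h0
  rcases h 2 Nat.prime_two (by omega) with (h | ⟨a, b, hab, h1, h2⟩) | ⟨h, _⟩
  · omega
  · have e := parity_sq a
    have e' := parity_sq b
    unfold Pm at h1
    push_cast at hab
    omega
  · omega

lemma pm_of_dvd {m : ℕ} (hm : Okm m) (u v n k : ℤ) (h : u ^ 2 + v ^ 2 = 2 * n)
    (hk : (m : ℤ) = n * k) : Pm u ∧ Pm v := by
  have hm0 : m ≠ 0 := by have := hm.odd; omega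
  have hn0 : 0 ≤ n := by nlinarith [sq_nonneg u, sq_nonneg v]
  lift n to ℕ using hn0
  have hd : n ∣ m := by
    have : (n : ℤ) ∣ (m : ℤ) := ⟨k, hk⟩
    exact_mod_cast this
  have hpos : 0 < n := Nat.pos_of_dvd_of_pos hd (Nat.pos_of_ne_zero hm0)
  exact pm_of_sum_sq n hpos (hm.of_dvd hd) u v h

set_option maxHeartbeats 1000000 in
lemma core {m : ℕ} (hm : Okm m) : (64 * (m : ℤ)) ∉ S16 := by
  rintro ⟨a, ha⟩
  obtain ⟨A, B, C, D, hdet⟩ := det_formula a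
  rw [hdet] at ha
  have hodd := hm.odd
  have p1 : ∀ x : Fin 4 → ℤ, cm x % 2 = c1 x % 2 := by intro x; unfold cm c1; omega
  have p2 : ∀ x : Fin 4 → ℤ, (cr x + ci x) % 2 = c1 x % 2 := by
    intro x; unfold cr ci c1; omega
  have pA := p1 A
  have pB := p1 B
  have pC := p1 C
  have pD := p1 D
  have rA := p2 A
  have rB := p2 B
  have rC := p2 C
  have rD := p2 D
  have hEpar := parity_E (cr A) (ci A) (cr B) (ci B) (cr C) (ci C) (cr D) (ci D)
  have hp := parity_p (cm A) (cm B) (cm C) (cm D)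
  have hq := parity_q (cm A) (cm B) (cm C) (cm D)
  have hloc := local_contra A B C D
  have hpmE := pm_of_dvd hm (eRe (cr A) (ci A) (cr B) (ci B) (cr C) (ci C) (cr D) (ci D))
    (eIm (cr A) (ci A) (cr B) (ci B) (cr C) (ci C) (cr D) (ci D))
  have hpmD := pm_of_dvd hm (cm A ^ 2 - cm B ^ 2 + 2 * cm C * cm D)
    (2 * cm A * cm B - cm C ^ 2 + cm D ^ 2)
  have hpmC := pm_of_dvd hm (c1 A - c1 B) (c1 C - c1 D)
  generalize eRe (cr A) (ci A) (cr B) (ci B) (cr C) (ci C) (cr D) (ci D) = e1 at *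
  generalize eIm (cr A) (ci A) (cr B) (ci B) (cr C) (ci C) (cr D) (ci D) = e2 at *
  generalize cm A ^ 2 - cm B ^ 2 + 2 * cm C * cm D = d1 at *
  generalize 2 * cm A * cm B - cm C ^ 2 + cm D ^ 2 = d2 at *
  obtain ⟨s, hs⟩ : ∃ s, s = c1 A + c1 B := ⟨_, rfl⟩
  obtain ⟨t, ht⟩ : ∃ t, t = c1 C + c1 D := ⟨_, rfl⟩
  obtain ⟨u, hu⟩ : ∃ u, u = c1 A - c1 B := ⟨_, rfl⟩
  obtain ⟨v, hv⟩ : ∃ v, v = c1 C - c1 D := ⟨_, rfl⟩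
  rw [← hs, ← ht, ← hu, ← hv] at ha
  rw [← hs, ← ht, ← hu, ← hv] at hloc
  rw [← hu, ← hv] at hpmC
  have fd1 : d1 % 2 = s % 2 := by clear hEpar; omega
  have fd2 : d2 % 2 = t % 2 := by clear hEpar; omega
  have fu : u % 2 = s % 2 := by clear hEpar; omega
  have fv : v % 2 = t % 2 := by clear hEpar; omega
  have fE : (e1 ^ 2 + e2 ^ 2) % 2 = (s + t) % 2 := by
    rw [hEpar]; clear hEpar hp hq pA pB pC pD; omega
  clear hEpar hp hq pA pB pC pD rA rB rC rD p1 p2 hs ht hu hv hdet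
  have qs := parity_sq s
  have qt := parity_sq t
  have qu := parity_sq u
  have qv := parity_sq v
  have qd1 := parity_sq d1
  have qd2 := parity_sq d2
  rcases Int.emod_two_eq_zero_or_one s with h1 | h1 <;>
    rcases Int.emod_two_eq_zero_or_one t with h2 | h2
  · -- all even
    obtain ⟨k1, hk1⟩ := even_sq h1
    obtain ⟨k2, hk2⟩ := even_sq h2
    obtain ⟨k3, hk3⟩ := even_sq (x := u) (by omega)
    obtain ⟨k4, hk4⟩ := even_sq (x := v) (by omega)
    obtain ⟨k5, hk5⟩ := even_sq (x := d1) (by omega)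
    obtain ⟨k6, hk6⟩ := even_sq (x := d2) (by omega)
    obtain ⟨k7, hk7⟩ : ∃ k, e1 ^ 2 + e2 ^ 2 = 2 * k := ⟨(e1 ^ 2 + e2 ^ 2) / 2, by omega⟩
    rw [hk1, hk2, hk3, hk4, hk5, hk6, hk7] at ha
    have : (m : ℤ) = 2 * ((k1 - k2) * (k3 + k4) * (k5 + k6) * k7) := by
      apply mul_left_cancel₀ (show (64 : ℤ) ≠ 0 by norm_num)
      rw [ha]; ring
    omega
  · exfalso
    have o1 : Odd (s ^ 2 - t ^ 2) := Int.odd_iff.2 (by omega)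
    have o2 : Odd (u ^ 2 + v ^ 2) := Int.odd_iff.2 (by omega)
    have o3 : Odd (d1 ^ 2 + d2 ^ 2) := Int.odd_iff.2 (by omega)
    have o4 : Odd (e1 ^ 2 + e2 ^ 2) := Int.odd_iff.2 (by omega)
    have := Int.odd_iff.1 (((o1.mul o2).mul o3).mul o4)
    omega
  · exfalso
    have o1 : Odd (s ^ 2 - t ^ 2) := Int.odd_iff.2 (by omega)
    have o2 : Odd (u ^ 2 + v ^ 2) := Int.odd_iff.2 (by omega)
    have o3 : Odd (d1 ^ 2 + d2 ^ 2) := Int.odd_iff.2 (by omega)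
    have o4 : Odd (e1 ^ 2 + e2 ^ 2) := Int.odd_iff.2 (by omega)
    have := Int.odd_iff.1 (((o1.mul o2).mul o3).mul o4)
    omega
  · -- the main case
    obtain ⟨k1, hk1⟩ := odd_sq h1
    obtain ⟨k2, hk2⟩ := odd_sq h2
    obtain ⟨X, hX⟩ : ∃ k, s ^ 2 - t ^ 2 = 8 * k := ⟨k1 - k2, by omega⟩
    obtain ⟨n1, hn1⟩ : ∃ k, u ^ 2 + v ^ 2 = 2 * k := ⟨(u ^ 2 + v ^ 2) / 2, by omega⟩
    obtain ⟨n2, hn2⟩ : ∃ k, d1 ^ 2 + d2 ^ 2 = 2 * k := ⟨(d1 ^ 2 + d2 ^ 2) / 2, by omega⟩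
    obtain ⟨n3, hn3⟩ : ∃ k, e1 ^ 2 + e2 ^ 2 = 2 * k := ⟨(e1 ^ 2 + e2 ^ 2) / 2, by omega⟩
    rw [hX, hn1, hn2, hn3] at ha
    have hmX : (m : ℤ) = X * n1 * n2 * n3 := by
      apply mul_left_cancel₀ (show (64 : ℤ) ≠ 0 by norm_num)
      rw [ha]; ring
    have hXodd : X % 2 = 1 := by
      have : Odd (X * n1 * n2 * n3) := by
        rw [← hmX]; exact Int.odd_iff.2 (by omega)
      simp only [Int.odd_mul] at this
      exact Int.odd_iff.1 this.1.1.1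
    obtain ⟨c1', c2'⟩ := hpmC n1 (X * n2 * n3) hn1 (by rw [hmX]; ring)
    obtain ⟨d1', d2'⟩ := hpmD n2 (X * n1 * n3) hn2 (by rw [hmX]; ring)
    obtain ⟨e1', e2'⟩ := hpmE n3 (X * n1 * n2) hn3 (by rw [hmX]; ring)
    exact hloc h1 h2 (by omega) c1' c2' d1' e1'

lemma okm_prod (r s t : ℕ) (p : Fin (r + s) → ℕ) (q : Fin t → ℕ)
    (k : Fin (r + s) → ℕ)
    (hp : ∀ i, (p i).Prime)
    (hp1 : ∀ i : Fin (r + s), (i : ℕ) < r → p i % 8 = 1 ∧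
      ∃ a b : ℤ, (p i : ℤ) = a ^ 2 + b ^ 2 ∧
        (a + b ≡ 1 [ZMOD 8] ∨ a + b ≡ -1 [ZMOD 8]) ∧
        (a - b ≡ 1 [ZMOD 8] ∨ a - b ≡ -1 [ZMOD 8]))
    (hp7 : ∀ i : Fin (r + s), r ≤ (i : ℕ) → p i % 8 = 7)
    (hq : ∀ j, (q j).Prime) (hq3 : ∀ j, q j % 8 = 3) (hqinj : Function.Injective q) :
    Okm ((∏ i, p i ^ k i) * ∏ j, q j) := by
  have hp3 : ∀ i, p i % 8 ≠ 3 := by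
    intro i
    by_cases h : (i : ℕ) < r
    · have := (hp1 i h).1; omega
    · have := hp7 i (by omega); omega
  have hadm : ∀ i, Adm (p i) := by
    intro i
    by_cases h : (i : ℕ) < r
    · obtain ⟨_, a, b, hab, h1, h2⟩ := hp1 i h
      right
      refine ⟨a, b, hab, ?_, ?_⟩
      · unfold Pm; unfold Int.ModEq at h1; omega
      · unfold Pm; unfold Int.ModEq at h2; omega
    · left; exact hp7 i (by omega)
  have hdp : ∀ l : ℕ, l.Prime → l ∣ ∏ i, p i ^ k i → ∃ i, l = p i := by
    intro l hl hd
    obtain ⟨i, _, hi⟩ := (hl.prime.dvd_finsetProd_iff _).1 hd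
    exact ⟨i, (Nat.prime_dvd_prime_iff_eq hl (hp i)).1 (hl.dvd_of_dvd_pow hi)⟩
  intro l hl hd
  rcases (hl.dvd_mul).1 hd with h | h
  · obtain ⟨i, rfl⟩ := hdp l hl h
    exact Or.inl (hadm i)
  · obtain ⟨j, _, hj⟩ := (hl.prime.dvd_finsetProd_iff _).1 h
    obtain rfl := (Nat.prime_dvd_prime_iff_eq hl (hq j)).1 hj
    refine Or.inr ⟨hq3 j, fun hsq => ?_⟩
    rw [← Finset.mul_prod_erase Finset.univ q (Finset.mem_univ j)] at hsq
    have h2 : q j ∣ (∏ i, p i ^ k i) * ∏ x ∈ Finset.univ.erase j, q x := by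
      apply Nat.dvd_of_mul_dvd_mul_left hl.pos
      rw [← sq]
      convert hsq using 1
      ring
    rcases (hl.dvd_mul).1 h2 with h3 | h3
    · obtain ⟨i, hi⟩ := hdp _ hl h3
      exact hp3 i (hi ▸ hq3 j)
    · obtain ⟨j', hj', hd'⟩ := (hl.prime.dvd_finsetProd_iff _).1 h3
      have := hqinj ((Nat.prime_dvd_prime_iff_eq hl (hq j')).1 hd')
      exact (Finset.mem_erase.1 hj').1 this.symm

theorem impossible_values (r s t : ℕ) (p : Fin (r + s) → ℕ) (q : Fin t → ℕ)
    (k : Fin (r + s) → ℕ)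
    (hp : ∀ i, (p i).Prime)
    (hp1 : ∀ i : Fin (r + s), (i : ℕ) < r → p i % 8 = 1 ∧
      ∃ a b : ℤ, (p i : ℤ) = a ^ 2 + b ^ 2 ∧
        (a + b ≡ 1 [ZMOD 8] ∨ a + b ≡ -1 [ZMOD 8]) ∧
        (a - b ≡ 1 [ZMOD 8] ∨ a - b ≡ -1 [ZMOD 8]))
    (hp7 : ∀ i : Fin (r + s), r ≤ (i : ℕ) → p i % 8 = 7)
    (hq : ∀ j, (q j).Prime) (hq3 : ∀ j, q j % 8 = 3) (hqinj : Function.Injective q) :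
    (64 * ∏ i, (p i : ℤ) ^ k i) ∉ S16 ∧
    (64 * (∏ i, (p i : ℤ) ^ k i) * ∏ j, (q j : ℤ)) ∉ S16 := by
  have h := okm_prod r s t p q k hp hp1 hp7 hq hq3 hqinj
  constructor
  · have := core (h.of_dvd (Dvd.intro _ rfl))
    push_cast at this
    exact this
  · have := core h
    push_cast at this
    rw [mul_assoc]
    exact this
end

section
/- For integers a_0, …, a_15, if b_0 ≢ b_2 (mod 2) and b_1 ≢ b_3 (mod 2), then N_4 ≡ N_8 · N_16 − 4(b_0 b_2 + b_1 b_3) + 2 (mod 16). -/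
open Complex Finset

theorem zeta16_pow_four : zeta16 ^ 4 = I := by
  unfold zeta16
  rw [← Complex.exp_nat_mul]
  refine Eq.trans ?_ Complex.exp_pi_div_two_mul_I
  congr 1
  push_cast
  ring

theorem N4_cong_mod_sixteen (a : Fin 16 → ℤ)
    (N4 N8 N16 : ℤ)
    (h4 : (N4 : ℂ) = Nprod a 4) (h8 : (N8 : ℂ) = Nprod a 8) (h16 : (N16 : ℂ) = Nprod a 16)
    (hb02 : ¬ bcoef a 0 ≡ bcoef a 2 [ZMOD 2]) (hb13 : ¬ bcoef a 1 ≡ bcoef a 3 [ZMOD 2]) :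
    N4 ≡ N8 * N16 - 4 * (bcoef a 0 * bcoef a 2 + bcoef a 1 * bcoef a 3) + 2 [ZMOD 16] := by
  have hz := zeta16_pow_four
  have h8z : zeta16 ^ 8 = -1 := by
    rw [show (8:ℕ) = 4 * 2 from rfl, pow_mul, hz, I_sq]
  have h12z : zeta16 ^ 12 = -I := by
    rw [show (12:ℕ) = 4 + 8 from rfl, pow_add, hz, h8z]; ring
  have I2 : I ^ 2 = -1 := I_sq
  have I4 : I ^ 4 = 1 := I_pow_four
  have fI : ∀ x : ℂ, x ^ 4 = 1 → fpoly a x =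
      (bcoef a 0 : ℂ) + bcoef a 1 * x + bcoef a 2 * x ^ 2 + bcoef a 3 * x ^ 3 := by
    intro x hx
    have e : ∀ n k : ℕ, x ^ (4 * n + k) = x ^ k := by
      intro n k; rw [pow_add, pow_mul, hx, one_pow, one_mul]
    have e4 := e 1 0
    have e5 := e 1 1
    have e6 := e 1 2
    have e7 := e 1 3
    have e8 := e 2 0
    have e9 := e 2 1
    have e10 := e 2 2
    have e11 := e 2 3
    have e12 := e 3 0
    have e13 := e 3 1
    have e14 := e 3 2
    have e15 := e 3 3
    norm_num at e4 e5 e6 e7 e8 e9 e10 e11 e12 e13 e14 e15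
    simp [fpoly, bcoef, Fin.sum_univ_succ, Fin.succ, e4, e5, e6, e7, e8, e9, e10, e11, e12, e13,
      e14, e15]
    ring
  have k16 : N16 = bcoef a 0 + bcoef a 1 + bcoef a 2 + bcoef a 3 := by
    have : Finset.filter (fun l => Nat.gcd l 16 = 16) (Finset.range 16) = {0} := by decide
    rw [Nprod, this, prod_singleton, pow_zero, fI 1 (by norm_num)] at h16
    have h : (N16 : ℂ) = ((bcoef a 0 + bcoef a 1 + bcoef a 2 + bcoef a 3 : ℤ) : ℂ) := by
      rw [h16]; push_cast; ring
    exact_mod_cast h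
  have k8 : N8 = bcoef a 0 - bcoef a 1 + bcoef a 2 - bcoef a 3 := by
    have : Finset.filter (fun l => Nat.gcd l 16 = 8) (Finset.range 16) = {8} := by decide
    rw [Nprod, this, prod_singleton, h8z, fI (-1) (by norm_num)] at h8
    have h : (N8 : ℂ) = ((bcoef a 0 - bcoef a 1 + bcoef a 2 - bcoef a 3 : ℤ) : ℂ) := by
      rw [h8]; push_cast; ring
    exact_mod_cast h
  have k4 : N4 = (bcoef a 0 - bcoef a 2) ^ 2 + (bcoef a 1 - bcoef a 3) ^ 2 := by
    have : Finset.filter (fun l => Nat.gcd l 16 = 4) (Finset.range 16) = {4, 12} := by decide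
    rw [Nprod, this, prod_pair (by norm_num), hz, h12z, fI I I4,
      fI (-I) (by rw [neg_pow, I4]; norm_num)] at h4
    have I3 : I ^ 3 = -I := I_pow_three
    have J3 : (-I) ^ 3 = I := by rw [neg_pow, I3]; ring
    have J2 : (-I) ^ 2 = -1 := by rw [neg_pow, I2]; ring
    rw [I3, J3, J2, I2] at h4
    have h : (N4 : ℂ) = (((bcoef a 0 - bcoef a 2) ^ 2 + (bcoef a 1 - bcoef a 3) ^ 2 : ℤ) : ℂ) := by
      rw [h4]; push_cast
      linear_combination (-((bcoef a 1 : ℂ) - bcoef a 3) ^ 2) * I2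
    exact_mod_cast h
  subst k16 k8 k4
  generalize bcoef a 0 = b0 at *
  generalize bcoef a 1 = b1 at *
  generalize bcoef a 2 = b2 at *
  generalize bcoef a 3 = b3 at *
  have hodd : Odd (b1 + b3) := by
    rw [Int.odd_iff]
    unfold Int.ModEq at hb13
    omega
  obtain ⟨c, hc⟩ := Int.eight_dvd_sq_sub_one_of_odd hodd
  apply Int.ModEq.symm
  rw [Int.modEq_iff_dvd]
  exact ⟨c, by linear_combination 2 * hc⟩
end

section
/- For integers a_0, …, a_15, if c_0 ≢ c_2 (mod 2) and c_1 ≢ c_3 (mod 2), then Re(α_2) ≡ (−1)^{c_2} + 2(c_0 c_2 + c_1 c_3) (mod 8) and Im(α_2) ≡ (−1)^{c_1} + 2(c_0 c_2 + c_1 c_3) (mod 8). -/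
open Complex Finset

noncomputable def zeta8 : ℂ := Complex.exp (2 * Real.pi * Complex.I / 8)

theorem aux_mod (x y : ℤ) (h : ¬ x ≡ y [ZMOD 2]) :
    ∃ m : ℤ, x ^ 2 - y ^ 2 = (-1) ^ y.natAbs + 2 * (x * y) + 8 * m := by
  rcases Int.even_or_odd y with hy | hy
  · have e : (-1 : ℤ) ^ y.natAbs = 1 := Even.neg_one_pow (Int.natAbs_even.mpr hy)
    rw [e]
    obtain ⟨k, hk⟩ := hy
    have hx : ∃ j, x = 2 * j + 1 := ⟨x / 2, by unfold Int.ModEq at h; omega⟩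
    obtain ⟨j, rfl⟩ := hx
    subst hk
    obtain ⟨u, hu⟩ := Int.even_mul_succ_self j
    obtain ⟨v, hv⟩ := Int.even_mul_succ_self k
    exact ⟨u - v - j * k, by linear_combination 4 * hu - 4 * hv⟩
  · have e : (-1 : ℤ) ^ y.natAbs = -1 := Odd.neg_one_pow (Int.natAbs_odd.mpr hy)
    rw [e]
    obtain ⟨k, hk⟩ := hy
    have hx : ∃ j, x = 2 * j := ⟨x / 2, by unfold Int.ModEq at h; omega⟩
    obtain ⟨j, rfl⟩ := hx
    subst hk
    obtain ⟨u, hu⟩ := Int.even_mul_succ_self j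
    obtain ⟨v, hv⟩ := Int.even_mul_succ_self k
    exact ⟨u - v - j * k - j, by linear_combination 4 * hu - 4 * hv⟩

theorem zeta8_sq : zeta8 ^ 2 = Complex.I := by
  unfold zeta8
  rw [← Complex.exp_nat_mul]
  refine Eq.trans ?_ Complex.exp_pi_div_two_mul_I
  congr 1
  push_cast
  ring

theorem fpoly_root (a : Fin 16 → ℤ) (z : ℂ) (hz : z ^ 2 = Complex.I) :
    fpoly a z = ((ccoef a 0 : ℤ) + (ccoef a 2 : ℤ) * Complex.I)
      + z * ((ccoef a 1 : ℤ) + (ccoef a 3 : ℤ) * Complex.I) := by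
  have h4 : z ^ 4 = -1 := by
    rw [show z ^ 4 = (z ^ 2) ^ 2 by ring, hz, Complex.I_sq]
  have h3 : z ^ 3 = z * Complex.I := by rw [← hz]; ring
  have hk : ∀ k, z ^ (k + 4) = - z ^ k := fun k => by rw [pow_add, h4]; ring
  have h5 := hk 1
  have h6 := hk 2
  have h7 := hk 3
  have h8 := hk 4
  have h9 := hk 5
  have h10 := hk 6
  have h11 := hk 7
  have h12 := hk 8
  have h13 := hk 9
  have h14 := hk 10
  have h15 := hk 11
  norm_num at h5 h6 h7 h8 h9 h10 h11 h12 h13 h14 h15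
  simp [fpoly, Fin.sum_univ_succ, ccoef, Fin.succ, h15, h14, h13, h12, h11, h10, h9, h8, h7, h6,
    h5, h4, h3, hz]
  ring

theorem alpha2_re_im_mod_eight (a : Fin 16 → ℤ)
    (hc02 : ¬ ccoef a 0 ≡ ccoef a 2 [ZMOD 2]) (hc13 : ¬ ccoef a 1 ≡ ccoef a 3 [ZMOD 2]) :
    (∃ m : ℤ, (fpoly a zeta8 * fpoly a (zeta8 ^ 5)).re =
      (((-1) ^ (ccoef a 2).natAbs
        + 2 * (ccoef a 0 * ccoef a 2 + ccoef a 1 * ccoef a 3) + 8 * m : ℤ) : ℝ)) ∧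
    (∃ m : ℤ, (fpoly a zeta8 * fpoly a (zeta8 ^ 5)).im =
      (((-1) ^ (ccoef a 1).natAbs
        + 2 * (ccoef a 0 * ccoef a 2 + ccoef a 1 * ccoef a 3) + 8 * m : ℤ) : ℝ)) := by
  have h5 : zeta8 ^ 5 = -zeta8 := by
    rw [show zeta8 ^ 5 = (zeta8 ^ 2) ^ 2 * zeta8 by ring, zeta8_sq, Complex.I_sq]; ring
  have hprod : fpoly a zeta8 * fpoly a (zeta8 ^ 5) =
      (((ccoef a 0 ^ 2 - ccoef a 2 ^ 2 + 2 * (ccoef a 1 * ccoef a 3) : ℤ) : ℝ) : ℂ) +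
      (((ccoef a 3 ^ 2 - ccoef a 1 ^ 2 + 2 * (ccoef a 0 * ccoef a 2) : ℤ) : ℝ) : ℂ)
        * Complex.I := by
    rw [h5, fpoly_root a zeta8 zeta8_sq, fpoly_root a (-zeta8) (by rw [neg_sq, zeta8_sq])]
    push_cast
    linear_combination (-((ccoef a 1 : ℂ) + (ccoef a 3 : ℂ) * Complex.I) ^ 2) * zeta8_sq +
      ((ccoef a 2 : ℂ) ^ 2 - 2 * ccoef a 1 * ccoef a 3 - ccoef a 3 ^ 2 * Complex.I) * Complex.I_sq
  obtain ⟨m, hm⟩ := aux_mod _ _ hc02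
  obtain ⟨n, hn⟩ := aux_mod (ccoef a 3) (ccoef a 1) (fun h => hc13 h.symm)
  rw [hprod]
  refine ⟨⟨m, ?_⟩, ⟨n, ?_⟩⟩
  · simp only [Complex.add_re, Complex.add_im, Complex.ofReal_re, Complex.ofReal_im,
      Complex.re_ofReal_mul, Complex.im_ofReal_mul, Complex.I_re, Complex.I_im, mul_zero,
      mul_one, add_zero, zero_add]
    congr 1
    linear_combination hm
  · simp only [Complex.add_re, Complex.add_im, Complex.ofReal_re, Complex.ofReal_im,
      Complex.re_ofReal_mul, Complex.im_ofReal_mul, Complex.I_re, Complex.I_im, mul_zero,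
      mul_one, add_zero, zero_add]
    congr 1
    linear_combination hn
end

section
/- For integers a_0, …, a_15, if e_0 + e_4 ≢ e_2 + e_6 (mod 2) and e_1 + e_5 ≢ e_3 + e_7 (mod 2), then 2(e_0 e_4 + e_2 e_6 + e_1 e_5 + e_3 e_7) ≡ b_0 b_2 + b_1 b_3 + c_0 c_2 + c_1 c_3 (mod 4). -/
open Complex Finset

/-- If the sum of two integers is odd, their product is even; applied to
`p - s` and `q - r`. -/
lemma even_prod_of_not_modEq (p q r s : ℤ) (h : ¬ p + q ≡ r + s [ZMOD 2]) :
    ∃ m, (p - s) * (q - r) = 2 * m := by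
  have h' : (p - s) % 2 = 0 ∨ (q - r) % 2 = 0 := by
    unfold Int.ModEq at h
    omega
  rcases h' with h' | h'
  · exact dvd_mul_of_dvd_left (Int.dvd_of_emod_eq_zero h') _
  · exact dvd_mul_of_dvd_right (Int.dvd_of_emod_eq_zero h') _

theorem e_products_cong_mod_four (a : Fin 16 → ℤ)
    (h02 : ¬ ecoef a 0 + ecoef a 4 ≡ ecoef a 2 + ecoef a 6 [ZMOD 2])
    (h13 : ¬ ecoef a 1 + ecoef a 5 ≡ ecoef a 3 + ecoef a 7 [ZMOD 2]) :
    2 * (ecoef a 0 * ecoef a 4 + ecoef a 2 * ecoef a 6 + ecoef a 1 * ecoef a 5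
        + ecoef a 3 * ecoef a 7)
      ≡ bcoef a 0 * bcoef a 2 + bcoef a 1 * bcoef a 3
        + ccoef a 0 * ccoef a 2 + ccoef a 1 * ccoef a 3 [ZMOD 4] := by
  obtain ⟨m, hm⟩ := even_prod_of_not_modEq _ _ _ _ h02
  obtain ⟨n, hn⟩ := even_prod_of_not_modEq _ _ _ _ h13
  apply Int.ModEq.symm
  rw [Int.modEq_iff_dvd]
  simp only [ecoef, bcoef, ccoef, Fin.reduceAdd, zero_add] at *
  refine ⟨m + n - ((a 0 - a 8) * a 10 + a 8 * (a 2 - a 10) + 2 * a 8 * a 10)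
    - ((a 4 - a 12) * a 14 + a 12 * (a 6 - a 14) + 2 * a 12 * a 14)
    - ((a 1 - a 9) * a 11 + a 9 * (a 3 - a 11) + 2 * a 9 * a 11)
    - ((a 5 - a 13) * a 15 + a 13 * (a 7 - a 15) + 2 * a 13 * a 15), ?_⟩
  have e1 : (1 + 8 : Fin 16) = 9 := rfl
  have e2 : (1 + 4 : Fin 16) = 5 := rfl
  have e3 : (1 + 12 : Fin 16) = 13 := rfl
  simp only [e1, e2, e3] at *
  linear_combination 2 * hm + 2 * hn
end

section
/- Let p_1, …, p_r be primes such that for each 1 ≤ i ≤ r there are integers a_i, b_i with p_i = a_i² + b_i² ≡ 1 (mod 8) and both a_i + b_i and a_i − b_i congruent to 1 or −1 modulo 8; let p_{r+1}, …, p_{r+s} be primes each congruent to 7 (mod 8); and let k_1, …, k_{r+s} be non-negative integers. If α ∈ ℤ[i] satisfies α · conj(α) = 2 · p_1^{k_1} ⋯ p_r^{k_r} · p_{r+1}^{2k_{r+1}} ⋯ p_{r+s}^{2k_{r+s}}, then both Re(α) and Im(α) are congruent to 1 or −1 modulo 8. -/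
def GoodPair (x y : ℤ) : Prop :=
  (x ≡ 1 [ZMOD 8] ∨ x ≡ -1 [ZMOD 8]) ∧ (y ≡ 1 [ZMOD 8] ∨ y ≡ -1 [ZMOD 8])

/-- Every representation of `2 * N` as a sum of two squares is good. -/
def GoodNum (N : ℤ) : Prop := ∀ x y : ℤ, x ^ 2 + y ^ 2 = 2 * N → GoodPair x y

/-- Multiplying by `M` preserves `GoodNum`. -/
def GoodMul (M : ℤ) : Prop := ∀ N, GoodNum N → GoodNum (M * N)

lemma goodMul_one : GoodMul 1 := fun N h => by simpa using h

lemma goodMul_mul (A B : ℤ) (hA : GoodMul A) (hB : GoodMul B) : GoodMul (A * B) :=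
  fun N h => by rw [mul_assoc]; exact hA _ (hB _ h)

lemma goodMul_pow (A : ℤ) (hA : GoodMul A) (n : ℕ) : GoodMul (A ^ n) := by
  induction n with
  | zero => simpa using goodMul_one
  | succ n ih => rw [pow_succ]; exact goodMul_mul _ _ ih hA

lemma goodNum_one : GoodNum 1 := by
  intro x y h
  have hx : x ≤ 1 := by nlinarith [sq_nonneg y]
  have hx' : -1 ≤ x := by nlinarith [sq_nonneg y]
  have hy : y ≤ 1 := by nlinarith [sq_nonneg x]
  have hy' : -1 ≤ y := by nlinarith [sq_nonneg x]
  interval_cases x <;> interval_cases y <;> simp_all [GoodPair]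

lemma goodPair_mul (a b u v : ℤ)
    (h1 : a + b ≡ 1 [ZMOD 8] ∨ a + b ≡ -1 [ZMOD 8])
    (h2 : a - b ≡ 1 [ZMOD 8] ∨ a - b ≡ -1 [ZMOD 8])
    (h : GoodPair u v) : GoodPair (a * u - b * v) (b * u + a * v) := by
  have key : ∀ a b u v : ZMod 8, (a + b = 1 ∨ a + b = -1) → (a - b = 1 ∨ a - b = -1) →
      (u = 1 ∨ u = -1) → (v = 1 ∨ v = -1) →
      (a * u - b * v = 1 ∨ a * u - b * v = -1) ∧ (b * u + a * v = 1 ∨ b * u + a * v = -1) := by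
    intro a b u v h1 h2 hu hv
    revert h1 h2
    rcases hu with rfl | rfl <;> rcases hv with rfl | rfl <;> revert a b <;> decide
  have tr : ∀ z : ℤ, (z ≡ 1 [ZMOD 8] ∨ z ≡ -1 [ZMOD 8]) ↔
      ((z : ZMod 8) = 1 ∨ (z : ZMod 8) = -1) := by
    intro z
    have e1 := ZMod.intCast_eq_intCast_iff z 1 8
    have e2 := ZMod.intCast_eq_intCast_iff z (-1) 8
    push_cast at e1 e2
    rw [e1, e2]
  have h' := key a b u v (by simpa using (tr _).1 h1) (by simpa using (tr _).1 h2)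
    ((tr _).1 h.1) ((tr _).1 h.2)
  exact ⟨(tr _).2 (by push_cast; exact h'.1), (tr _).2 (by push_cast; exact h'.2)⟩

lemma goodPair_desc (p a b N x y : ℤ) (hp : Prime p) (hpab : p = a ^ 2 + b ^ 2)
    (h1 : a + b ≡ 1 [ZMOD 8] ∨ a + b ≡ -1 [ZMOD 8])
    (h2 : a - b ≡ 1 [ZMOD 8] ∨ a - b ≡ -1 [ZMOD 8])
    (hN : GoodNum N) (hxy : x ^ 2 + y ^ 2 = 2 * (p * N)) (hd : p ∣ a * x + b * y) :
    GoodPair x y := by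
  have hp0 := hp.ne_zero
  obtain ⟨u, hu⟩ := hd
  have hid : (a * x + b * y) ^ 2 + (a * y - b * x) ^ 2 = p * (2 * (p * N)) := by
    rw [← hxy, hpab]; ring
  have hv : p ∣ a * y - b * x := by
    apply hp.dvd_of_dvd_pow (n := 2)
    refine ⟨2 * (p * N) - p * u ^ 2, ?_⟩
    rw [hu] at hid
    linear_combination hid
  obtain ⟨v, hv⟩ := hv
  have huv : u ^ 2 + v ^ 2 = 2 * N := by
    apply mul_left_cancel₀ (pow_ne_zero 2 hp0)
    rw [hu, hv] at hid
    linear_combination hid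
  have hx : x = a * u - b * v := by
    apply mul_left_cancel₀ hp0
    linear_combination a * hu - b * hv + x * hpab
  have hy : y = b * u + a * v := by
    apply mul_left_cancel₀ hp0
    linear_combination b * hu + a * hv + y * hpab
  rw [hx, hy]
  exact goodPair_mul _ _ _ _ h1 h2 (hN _ _ huv)

lemma goodMul_split (p a b : ℤ) (hp : Prime p) (hpab : p = a ^ 2 + b ^ 2)
    (h1 : a + b ≡ 1 [ZMOD 8] ∨ a + b ≡ -1 [ZMOD 8])
    (h2 : a - b ≡ 1 [ZMOD 8] ∨ a - b ≡ -1 [ZMOD 8]) : GoodMul p := by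
  intro N hN x y hxy
  have hd : p ∣ (a * x + b * y) * (a * x + -b * y) :=
    ⟨a ^ 2 * (2 * N) - y ^ 2, by linear_combination a ^ 2 * hxy + y ^ 2 * hpab⟩
  rcases hp.dvd_or_dvd hd with h | h
  · exact goodPair_desc p a b N x y hp hpab h1 h2 hN hxy h
  · refine goodPair_desc p a (-b) N x y hp (by rw [hpab]; ring) ?_ ?_ hN hxy h
    · simpa [sub_eq_add_neg] using h2
    · simpa using h1

lemma goodMul_inert (p : ℕ) (hp : p.Prime) (h7 : p % 8 = 7) : GoodMul ((p : ℤ) ^ 2) := by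
  intro N hN x y hxy
  haveI : Fact p.Prime := ⟨hp⟩
  have hp0 : (p : ℤ) ≠ 0 := by exact_mod_cast hp.ne_zero
  have hz : (x : ZMod p) ^ 2 + (y : ZMod p) ^ 2 = 0 := by
    have := congrArg (fun z : ℤ => (z : ZMod p)) hxy
    simpa using this
  have aux : ∀ s t : ZMod p, s ^ 2 + t ^ 2 = 0 → t = 0 := by
    intro s t h
    by_contra ht
    exact ZMod.mod_four_ne_three_of_sq_eq_neg_sq' ht (eq_neg_of_add_eq_zero_left h) (by omega)
  obtain ⟨v, rfl⟩ := (ZMod.intCast_zmod_eq_zero_iff_dvd y p).1 (aux _ _ hz)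
  obtain ⟨u, rfl⟩ := (ZMod.intCast_zmod_eq_zero_iff_dvd x p).1 (aux _ _ ((add_comm _ _).trans hz))
  have huv : u ^ 2 + v ^ 2 = 2 * N := by
    apply mul_left_cancel₀ (pow_ne_zero 2 hp0)
    linear_combination hxy
  have h := hN _ _ huv
  have hp7 : (p : ℤ) % 8 = 7 := by omega
  have tr : ∀ z : ℤ, (z ≡ 1 [ZMOD 8] ∨ z ≡ -1 [ZMOD 8]) →
      ((p : ℤ) * z ≡ 1 [ZMOD 8] ∨ (p : ℤ) * z ≡ -1 [ZMOD 8]) := by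
    intro z hz
    have hpm : (p : ℤ) ≡ -1 [ZMOD 8] := by rw [Int.ModEq, hp7]; rfl
    rcases hz with hz | hz
    · right; simpa using hpm.mul hz
    · left; simpa using hpm.mul hz
  exact ⟨tr _ h.1, tr _ h.2⟩

theorem gaussian_int_norm_re_im_mod_eight (r s : ℕ) (p : Fin (r + s) → ℕ)
    (k : Fin (r + s) → ℕ)
    (hp : ∀ i, (p i).Prime)
    (hp1 : ∀ i : Fin (r + s), (i : ℕ) < r → p i % 8 = 1 ∧
      ∃ a b : ℤ, (p i : ℤ) = a ^ 2 + b ^ 2 ∧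
        (a + b ≡ 1 [ZMOD 8] ∨ a + b ≡ -1 [ZMOD 8]) ∧
        (a - b ≡ 1 [ZMOD 8] ∨ a - b ≡ -1 [ZMOD 8]))
    (hp7 : ∀ i : Fin (r + s), r ≤ (i : ℕ) → p i % 8 = 7)
    (α : GaussianInt)
    (hα : α * star α =
      ((2 * ∏ i, (p i : ℤ) ^ (if (i : ℕ) < r then k i else 2 * k i) : ℤ) : GaussianInt)) :
    (α.re ≡ 1 [ZMOD 8] ∨ α.re ≡ -1 [ZMOD 8]) ∧
    (α.im ≡ 1 [ZMOD 8] ∨ α.im ≡ -1 [ZMOD 8]) := by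

  have hn : α.re ^ 2 + α.im ^ 2 =
      2 * ((∏ i, (p i : ℤ) ^ (if (i : ℕ) < r then k i else 2 * k i)) * 1) := by
    have h := congrArg Zsqrtd.re hα
    rw [Zsqrtd.re_intCast, Zsqrtd.re_mul, Zsqrtd.re_star, Zsqrtd.im_star] at h
    linear_combination h
  refine Finset.prod_induction _ GoodMul goodMul_mul goodMul_one ?_ 1 goodNum_one _ _ hn
  intro i _
  split_ifs with hi
  · obtain ⟨_, a, b, hab, h1, h2⟩ := hp1 i hi
    exact goodMul_pow _ (goodMul_split _ a b (Nat.prime_iff_prime_int.1 (hp i)) hab h1 h2) _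
  · rw [pow_mul]
    exact goodMul_pow _ (goodMul_inert _ (hp i) (hp7 i (not_lt.1 hi))) _
end

section
/- If p is a prime with p ≡ 5 (mod 8), then 64p ∈ S(16). -/
open Complex Finset

/-- The reduction map `ℤ[x]/(x^16-1) → ⊕ ℤ[x]/Φ_d`. -/
def redM : Matrix (Fin 16) (Fin 16) ℤ :=
  !![1, 1, 1, 1, 1, 1, 1, 1, 1, 1, 1, 1, 1, 1, 1, 1;
    1, -1, 1, -1, 1, -1, 1, -1, 1, -1, 1, -1, 1, -1, 1, -1;
    1, 0, 0, 0, -1, 0, 0, 0, 1, 0, 0, 0, -1, 0, 0, 0;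
    0, 1, 0, 0, 0, -1, 0, 0, 0, 1, 0, 0, 0, -1, 0, 0;
    0, 0, 1, 0, 0, 0, -1, 0, 0, 0, 1, 0, 0, 0, -1, 0;
    0, 0, 0, 1, 0, 0, 0, -1, 0, 0, 0, 1, 0, 0, 0, -1;
    1, 0, 0, 0, 0, 0, 0, 0, -1, 0, 0, 0, 0, 0, 0, 0;
    0, 1, 0, 0, 0, 0, 0, 0, 0, -1, 0, 0, 0, 0, 0, 0;
    0, 0, 1, 0, 0, 0, 0, 0, 0, 0, -1, 0, 0, 0, 0, 0;
    0, 0, 0, 1, 0, 0, 0, 0, 0, 0, 0, -1, 0, 0, 0, 0;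
    0, 0, 0, 0, 1, 0, 0, 0, 0, 0, 0, 0, -1, 0, 0, 0;
    0, 0, 0, 0, 0, 1, 0, 0, 0, 0, 0, 0, 0, -1, 0, 0;
    0, 0, 0, 0, 0, 0, 1, 0, 0, 0, 0, 0, 0, 0, -1, 0;
    0, 0, 0, 0, 0, 0, 0, 1, 0, 0, 0, 0, 0, 0, 0, -1;
    1, 0, -1, 0, 1, 0, -1, 0, 1, 0, -1, 0, 1, 0, -1, 0;
    0, 1, 0, -1, 0, 1, 0, -1, 0, 1, 0, -1, 0, 1, 0, -1]

/-- `16` times the inverse of `redM`. -/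
def redInv : Matrix (Fin 16) (Fin 16) ℤ :=
  !![1, 1, 4, 0, 0, 0, 8, 0, 0, 0, 0, 0, 0, 0, 2, 0;
    1, -1, 0, 4, 0, 0, 0, 8, 0, 0, 0, 0, 0, 0, 0, 2;
    1, 1, 0, 0, 4, 0, 0, 0, 8, 0, 0, 0, 0, 0, -2, 0;
    1, -1, 0, 0, 0, 4, 0, 0, 0, 8, 0, 0, 0, 0, 0, -2;
    1, 1, -4, 0, 0, 0, 0, 0, 0, 0, 8, 0, 0, 0, 2, 0;
    1, -1, 0, -4, 0, 0, 0, 0, 0, 0, 0, 8, 0, 0, 0, 2;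
    1, 1, 0, 0, -4, 0, 0, 0, 0, 0, 0, 0, 8, 0, -2, 0;
    1, -1, 0, 0, 0, -4, 0, 0, 0, 0, 0, 0, 0, 8, 0, -2;
    1, 1, 4, 0, 0, 0, -8, 0, 0, 0, 0, 0, 0, 0, 2, 0;
    1, -1, 0, 4, 0, 0, 0, -8, 0, 0, 0, 0, 0, 0, 0, 2;
    1, 1, 0, 0, 4, 0, 0, 0, -8, 0, 0, 0, 0, 0, -2, 0;
    1, -1, 0, 0, 0, 4, 0, 0, 0, -8, 0, 0, 0, 0, 0, -2;
    1, 1, -4, 0, 0, 0, 0, 0, 0, 0, -8, 0, 0, 0, 2, 0;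
    1, -1, 0, -4, 0, 0, 0, 0, 0, 0, 0, -8, 0, 0, 0, 2;
    1, 1, 0, 0, -4, 0, 0, 0, 0, 0, 0, 0, -8, 0, -2, 0;
    1, -1, 0, 0, 0, -4, 0, 0, 0, 0, 0, 0, 0, -8, 0, -2]

/-- Multiplication by `f` on the factors with constant entries. -/
def mulK : Matrix (Fin 14) (Fin 14) ℤ :=
  !![4, 0, 0, 0, 0, 0, 0, 0, 0, 0, 0, 0, 0, 0;
    0, 2, 0, 0, 0, 0, 0, 0, 0, 0, 0, 0, 0, 0;
    0, 0, 1, 1, -2, 2, 0, 0, 0, 0, 0, 0, 0, 0;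
    0, 0, -2, 1, 1, -2, 0, 0, 0, 0, 0, 0, 0, 0;
    0, 0, 2, -2, 1, 1, 0, 0, 0, 0, 0, 0, 0, 0;
    0, 0, -1, 2, -2, 1, 0, 0, 0, 0, 0, 0, 0, 0;
    0, 0, 0, 0, 0, 0, -1, 0, 0, 0, 0, 1, 0, 0;
    0, 0, 0, 0, 0, 0, 0, -1, 0, 0, 0, 0, 1, 0;
    0, 0, 0, 0, 0, 0, 0, 0, -1, 0, 0, 0, 0, 1;
    0, 0, 0, 0, 0, 0, -1, 0, 0, -1, 0, 0, 0, 0;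
    0, 0, 0, 0, 0, 0, 0, -1, 0, 0, -1, 0, 0, 0;
    0, 0, 0, 0, 0, 0, 0, 0, -1, 0, 0, -1, 0, 0;
    0, 0, 0, 0, 0, 0, 0, 0, 0, -1, 0, 0, -1, 0;
    0, 0, 0, 0, 0, 0, 0, 0, 0, 0, -1, 0, 0, -1]

def lowL : Matrix (Fin 14) (Fin 14) ℤ :=
  !![1, 0, 0, 0, 0, 0, 0, 0, 0, 0, 0, 0, 0, 0;
    0, 1, 0, 0, 0, 0, 0, 0, 0, 0, 0, 0, 0, 0;
    0, 0, 1, 0, 0, 0, 0, 0, 0, 0, 0, 0, 0, 0;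
    0, 0, 2, 1, 0, 0, 0, 0, 0, 0, 0, 0, 0, 0;
    0, 0, 2, 4, 3, 0, 0, 0, 0, 0, 0, 0, 0, 0;
    0, 0, -1, 1, 3, 3, 0, 0, 0, 0, 0, 0, 0, 0;
    0, 0, 0, 0, 0, 0, 1, 0, 0, 0, 0, 0, 0, 0;
    0, 0, 0, 0, 0, 0, 0, 1, 0, 0, 0, 0, 0, 0;
    0, 0, 0, 0, 0, 0, 0, 0, 1, 0, 0, 0, 0, 0;
    0, 0, 0, 0, 0, 0, -1, 0, 0, 1, 0, 0, 0, 0;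
    0, 0, 0, 0, 0, 0, 0, -1, 0, 0, 1, 0, 0, 0;
    0, 0, 0, 0, 0, 0, 0, 0, -1, 0, 0, 1, 0, 0;
    0, 0, 0, 0, 0, 0, 1, 0, -1, -1, 0, 1, 1, 0;
    0, 0, 0, 0, 0, 0, 1, 1, -1, -1, -1, 1, 1, 1]

def upU : Matrix (Fin 14) (Fin 14) ℤ :=
  !![4, 0, 0, 0, 0, 0, 0, 0, 0, 0, 0, 0, 0, 0;
    0, 2, 0, 0, 0, 0, 0, 0, 0, 0, 0, 0, 0, 0;
    0, 0, 1, 1, -2, 2, 0, 0, 0, 0, 0, 0, 0, 0;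
    0, 0, 0, 3, -3, 2, 0, 0, 0, 0, 0, 0, 0, 0;
    0, 0, 0, 0, 3, -1, 0, 0, 0, 0, 0, 0, 0, 0;
    0, 0, 0, 0, 0, 2, 0, 0, 0, 0, 0, 0, 0, 0;
    0, 0, 0, 0, 0, 0, -1, 0, 0, 0, 0, 1, 0, 0;
    0, 0, 0, 0, 0, 0, 0, -1, 0, 0, 0, 0, 1, 0;
    0, 0, 0, 0, 0, 0, 0, 0, -1, 0, 0, 0, 0, 1;
    0, 0, 0, 0, 0, 0, 0, 0, 0, -1, 0, -1, 0, 0;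
    0, 0, 0, 0, 0, 0, 0, 0, 0, 0, -1, 0, -1, 0;
    0, 0, 0, 0, 0, 0, 0, 0, 0, 0, 0, -1, 0, -1;
    0, 0, 0, 0, 0, 0, 0, 0, 0, 0, 0, 0, -1, -1;
    0, 0, 0, 0, 0, 0, 0, 0, 0, 0, 0, 0, 0, -2]

def base (k : Fin 16) : ℤ := ![0, -1, 1, 0, 0, 0, 0, 1, 1, -1, 1, 1, 0, 0, 0, 1] k
def dirU (k : Fin 16) : ℤ := ![1, 0, -1, 0, 1, 0, -1, 0, 1, 0, -1, 0, 1, 0, -1, 0] k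
def dirV (k : Fin 16) : ℤ := ![0, 1, 0, -1, 0, 1, 0, -1, 0, 1, 0, -1, 0, 1, 0, -1] k

def blk (K : Matrix (Fin 14) (Fin 14) ℤ) (R : Matrix (Fin 2) (Fin 2) ℤ) :
    Matrix (Fin 16) (Fin 16) ℤ :=
  (Matrix.fromBlocks K 0 0 R).submatrix (finSumFinEquiv (m := 14) (n := 2)).symm
    (finSumFinEquiv (m := 14) (n := 2)).symm

theorem det_blk (K : Matrix (Fin 14) (Fin 14) ℤ) (R : Matrix (Fin 2) (Fin 2) ℤ) :
    (blk K R).det = K.det * R.det := by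
  unfold blk
  rw [Matrix.det_submatrix_equiv_self, Matrix.det_fromBlocks_zero₂₁]

theorem blk_lin (K : Matrix (Fin 14) (Fin 14) ℤ) (R R₁ R₂ : Matrix (Fin 2) (Fin 2) ℤ) (m n : ℤ) :
    blk K (R + m • R₁ + n • R₂) = blk K R + m • blk 0 R₁ + n • blk 0 R₂ := by
  ext i j
  simp only [blk, Matrix.submatrix_apply, Matrix.add_apply, Matrix.smul_apply]
  rcases (finSumFinEquiv (m := 14) (n := 2)).symm i with i | i <;>
    rcases (finSumFinEquiv (m := 14) (n := 2)).symm j with j | j <;>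
      simp [Matrix.fromBlocks, -zsmul_eq_mul]

theorem det_redM_ne : redM.det ≠ 0 := by
  have h : redInv * redM = (16 : ℤ) • (1 : Matrix (Fin 16) (Fin 16) ℤ) := by decide +kernel
  intro h0
  have h2 := congrArg Matrix.det h
  rw [Matrix.det_mul, h0, Matrix.det_smul, Matrix.det_one] at h2
  norm_num at h2

theorem det_mulK : mulK.det = 32 := by
  have h : lowL * mulK = upU := by decide +kernel
  have zlowL : ∀ i j : Fin 14, (if i < j then lowL i j else 0) = 0 := by decide +kernel
  have hL : lowL.det = 9 := by
    rw [Matrix.det_of_isLowerTriangular lowL (by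
      intro i j hij
      have hz := zlowL i j
      rwa [if_pos (show i < j from hij)] at hz)]
    decide +kernel
  have zupU : ∀ i j : Fin 14, (if j < i then upU i j else 0) = 0 := by decide +kernel
  have hU : upU.det = 288 := by
    rw [Matrix.det_of_isUpperTriangular (M := upU) (by
      intro i j hij
      have hz := zupU i j
      rwa [if_pos (show j < i from hij)] at hz)]
    decide +kernel
  have h2 := congrArg Matrix.det h
  rw [Matrix.det_mul, hL, hU] at h2
  omega

theorem det_family (m n : ℤ) :
    (circMatrix (fun k => base k + m * dirU k + n * dirV k)).det
      = 32 * ((8 * m - 1) ^ 2 + (8 * n - 5) ^ 2) := by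
  have h0 : redM * circMatrix base = blk mulK !![-1, 5; -5, -1] * redM := by decide +kernel
  have h1 : redM * circMatrix dirU = blk 0 !![8, 0; 0, 8] * redM := by decide +kernel
  have h2 : redM * circMatrix dirV = blk 0 !![0, -8; 8, 0] * redM := by decide +kernel
  have hC : circMatrix (fun k => base k + m * dirU k + n * dirV k)
      = circMatrix base + m • circMatrix dirU + n • circMatrix dirV := by
    ext i j
    simp [circMatrix, -zsmul_eq_mul]
  have hT := blk_lin mulK !![-1, 5; -5, -1] !![8, 0; 0, 8] !![0, -8; 8, 0] m n
  have key : redM * circMatrix (fun k => base k + m * dirU k + n * dirV k)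
      = blk mulK (!![-1, 5; -5, -1] + m • !![8, 0; 0, 8] + n • !![0, -8; 8, 0]) * redM := by
    rw [hC, hT]
    simp only [Matrix.mul_add, Matrix.add_mul, Matrix.mul_smul, Matrix.smul_mul, h0, h1, h2]
  have hd := congrArg Matrix.det key
  rw [Matrix.det_mul, Matrix.det_mul, det_blk, det_mulK, mul_comm] at hd
  rw [mul_right_cancel₀ det_redM_ne hd, Matrix.det_fin_two]
  simp
  ring

theorem odd_sign (x : ℤ) (h : x ^ 2 % 16 = 1) : ∃ m, (8 * m - 1) ^ 2 = x ^ 2 := by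
  have h8 : x % 8 = 1 ∨ x % 8 = 7 := by
    have : x % 16 = 0 ∨ x % 16 = 1 ∨ x % 16 = 2 ∨ x % 16 = 3 ∨ x % 16 = 4 ∨ x % 16 = 5 ∨
      x % 16 = 6 ∨ x % 16 = 7 ∨ x % 16 = 8 ∨ x % 16 = 9 ∨ x % 16 = 10 ∨ x % 16 = 11 ∨
      x % 16 = 12 ∨ x % 16 = 13 ∨ x % 16 = 14 ∨ x % 16 = 15 := by omega
    rcases this with h' | h' | h' | h' | h' | h' | h' | h' | h' | h' | h' | h' | h' | h' | h' | h'
      <;> simp [pow_two, Int.mul_emod, h'] at h <;> omega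
  rcases h8 with h8 | h8
  · exact ⟨(1 - x) / 8, by rw [show 8 * ((1 - x) / 8) - 1 = -x by omega]; ring⟩
  · exact ⟨(1 + x) / 8, by rw [show 8 * ((1 + x) / 8) - 1 = x by omega]⟩

theorem odd_sign' (x : ℤ) (h : x ^ 2 % 16 = 9) : ∃ m, (8 * m - 5) ^ 2 = x ^ 2 := by
  have h8 : x % 8 = 3 ∨ x % 8 = 5 := by
    have : x % 16 = 0 ∨ x % 16 = 1 ∨ x % 16 = 2 ∨ x % 16 = 3 ∨ x % 16 = 4 ∨ x % 16 = 5 ∨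
      x % 16 = 6 ∨ x % 16 = 7 ∨ x % 16 = 8 ∨ x % 16 = 9 ∨ x % 16 = 10 ∨ x % 16 = 11 ∨
      x % 16 = 12 ∨ x % 16 = 13 ∨ x % 16 = 14 ∨ x % 16 = 15 := by omega
    rcases this with h' | h' | h' | h' | h' | h' | h' | h' | h' | h' | h' | h' | h' | h' | h' | h'
      <;> simp [pow_two, Int.mul_emod, h'] at h <;> omega
  rcases h8 with h8 | h8
  · exact ⟨(5 + x) / 8, by rw [show 8 * ((5 + x) / 8) - 5 = x by omega]⟩
  · exact ⟨(5 - x) / 8, by rw [show 8 * ((5 - x) / 8) - 5 = -x by omega]; ring⟩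

theorem sq_mod (x : ℤ) : x ^ 2 % 16 = 0 ∨ x ^ 2 % 16 = 1 ∨ x ^ 2 % 16 = 4 ∨ x ^ 2 % 16 = 9 := by
  have : x % 16 = 0 ∨ x % 16 = 1 ∨ x % 16 = 2 ∨ x % 16 = 3 ∨ x % 16 = 4 ∨ x % 16 = 5 ∨
    x % 16 = 6 ∨ x % 16 = 7 ∨ x % 16 = 8 ∨ x % 16 = 9 ∨ x % 16 = 10 ∨ x % 16 = 11 ∨
    x % 16 = 12 ∨ x % 16 = 13 ∨ x % 16 = 14 ∨ x % 16 = 15 := by omega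
  rcases this with h' | h' | h' | h' | h' | h' | h' | h' | h' | h' | h' | h' | h' | h' | h' | h'
    <;> simp [pow_two, Int.mul_emod, h']

theorem sixty_four_p_mem_S16_of_five_mod_eight (p : ℕ) (hp : p.Prime) (h5 : p % 8 = 5) :
    (64 * p : ℤ) ∈ S16 := by
  have : Fact p.Prime := ⟨hp⟩
  obtain ⟨a, b, hab⟩ := Nat.Prime.sq_add_sq (p := p) (by omega)
  have hab' : (a : ℤ) ^ 2 + (b : ℤ) ^ 2 = p := by exact_mod_cast hab
  have hs : ((a : ℤ) + b) ^ 2 + ((a : ℤ) - b) ^ 2 = 2 * p := by rw [← hab']; ring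
  generalize (a : ℤ) + b = x at hs
  generalize (a : ℤ) - b = y at hs
  have hx := sq_mod x
  have hy := sq_mod y
  have hcase : (x ^ 2 % 16 = 1 ∧ y ^ 2 % 16 = 9) ∨ (y ^ 2 % 16 = 1 ∧ x ^ 2 % 16 = 9) := by omega
  have fin : ∀ s t : ℤ, s ^ 2 + t ^ 2 = 2 * p → s ^ 2 % 16 = 1 → t ^ 2 % 16 = 9 →
      (64 * p : ℤ) ∈ S16 := by
    intro s t hst h1 h9
    obtain ⟨m, hm⟩ := odd_sign s h1
    obtain ⟨n, hn⟩ := odd_sign' t h9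
    refine ⟨fun k => base k + m * dirU k + n * dirV k, ?_⟩
    rw [det_family, hm, hn, hst]
    ring
  rcases hcase with ⟨h1, h2⟩ | ⟨h1, h2⟩
  · exact fin x y hs h1 h2
  · exact fin y x (by rw [add_comm]; exact hs) h1 h2
end

section
/- If p is a prime with p ≡ 3 (mod 8), then 64p² ∈ S(16). -/
open Complex Finset

/-- Every prime congruent to 3 modulo 8 is a square plus twice a square (argument of Thue). -/
lemma p_repr (p : ℕ) (hp : p.Prime) (h3 : p % 8 = 3) :
    ∃ X Y : ℤ, (p : ℤ) = X ^ 2 + 2 * Y ^ 2 := by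
  have : Fact p.Prime := ⟨hp⟩
  have h2 : p ≠ 2 := by rintro rfl; omega
  obtain ⟨r, hr⟩ := (ZMod.exists_sq_eq_neg_two_iff h2).2 (Or.inr h3)
  set n := Nat.sqrt p with hn
  have hn1 : p < (n + 1) * (n + 1) := Nat.lt_succ_sqrt p
  have hn2 : n * n < p := by
    refine lt_of_le_of_ne (Nat.sqrt_le p) ?_
    intro h
    rw [← h] at hp
    exact Nat.not_prime_mul (by rintro h1; rw [h1] at h; omega)
      (by rintro h1; rw [h1] at h; omega) hp
  have hcard : Fintype.card (ZMod p) < Fintype.card (Fin (n + 1) × Fin (n + 1)) := by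
    simpa [ZMod.card] using hn1
  obtain ⟨⟨x1, y1⟩, ⟨x2, y2⟩, hne, heq⟩ := Fintype.exists_ne_map_eq_of_card_lt
    (fun u : Fin (n + 1) × Fin (n + 1) => ((u.1 : ℕ) : ZMod p) - r * ((u.2 : ℕ) : ZMod p)) hcard
  simp only at heq
  set x : ℤ := (x1 : ℕ) - (x2 : ℕ) with hx
  set y : ℤ := (y1 : ℕ) - (y2 : ℕ) with hy
  have hxy : ((x : ℤ) : ZMod p) = r * (y : ℤ) := by
    rw [hx, hy]; push_cast; linear_combination heq
  have hdvd : (p : ℤ) ∣ x ^ 2 + 2 * y ^ 2 := by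
    rw [← ZMod.intCast_zmod_eq_zero_iff_dvd]
    push_cast
    rw [hxy]
    linear_combination (-(y : ZMod p) ^ 2) * hr
  have hx1 := x1.2
  have hx2 := x2.2
  have hy1 := y1.2
  have hy2 := y2.2
  have hxn : x ^ 2 ≤ (n : ℤ) * n := by
    have : |x| ≤ n := by rw [abs_le]; omega
    nlinarith [abs_nonneg x, sq_abs x]
  have hyn : y ^ 2 ≤ (n : ℤ) * n := by
    have : |y| ≤ n := by rw [abs_le]; omega
    nlinarith [abs_nonneg y, sq_abs y]
  have hpn : (n : ℤ) * n < p := by exact_mod_cast hn2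
  have hpos : 0 < x ^ 2 + 2 * y ^ 2 := by
    by_contra hcon
    have hx0 : x = 0 := by
      have : x ^ 2 = 0 := by nlinarith [sq_nonneg x, sq_nonneg y]
      exact pow_eq_zero_iff (by norm_num) |>.1 this
    have hy0 : y = 0 := by
      have : y ^ 2 = 0 := by nlinarith [sq_nonneg x, sq_nonneg y]
      exact pow_eq_zero_iff (by norm_num) |>.1 this
    apply hne
    ext <;> simp only <;> omega
  obtain ⟨c, hc⟩ := hdvd
  have hp0 : (0 : ℤ) < p := by exact_mod_cast hp.pos
  have hc0 : 0 < c := by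
    by_contra hcon
    nlinarith
  have hc3 : c < 3 := by
    by_contra hcon
    nlinarith
  interval_cases c
  · exact ⟨x, y, by linarith⟩
  · have hev : Even (x ^ 2) := ⟨p - y ^ 2, by linarith⟩
    rw [Int.even_pow' (by norm_num)] at hev
    obtain ⟨k, hk⟩ := hev
    refine ⟨y, k, ?_⟩
    rw [hk] at hc
    linarith

lemma p_repr_mod (p : ℕ) (h3 : p % 8 = 3) (X Y : ℤ) (h : (p : ℤ) = X ^ 2 + 2 * Y ^ 2) :
    ∃ s t : ℤ, (p : ℤ) = (1 + 4 * s) ^ 2 + 2 * (1 + 4 * t) ^ 2 := by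
  have key : ∀ Z : ℤ, Z % 2 = 1 → ∃ s : ℤ, (1 + 4 * s) ^ 2 = Z ^ 2 := by
    intro Z hZ
    rcases (by omega : Z % 4 = 1 ∨ Z % 4 = 3) with h | h
    · exact ⟨Z / 4, by rw [show 1 + 4 * (Z / 4) = Z by omega]⟩
    · exact ⟨(-Z) / 4, by rw [show 1 + 4 * ((-Z) / 4) = -Z by omega]; ring⟩
  have hX : X % 2 = 1 := by
    by_contra hcon
    obtain ⟨k, rfl⟩ : ∃ k, X = 2 * k := ⟨X / 2, by omega⟩
    have : (p : ℤ) = 2 * (2 * k ^ 2 + Y ^ 2) := by rw [h]; ring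
    omega
  have hY : Y % 2 = 1 := by
    by_contra hcon
    obtain ⟨k, rfl⟩ : ∃ k, Y = 2 * k := ⟨Y / 2, by omega⟩
    obtain ⟨m, rfl⟩ : ∃ m, X = 2 * m + 1 := ⟨X / 2, by omega⟩
    have : (p : ℤ) = 4 * (m ^ 2 + m + 2 * k ^ 2) + 1 := by rw [h]; ring
    omega
  obtain ⟨s, hs⟩ := key X hX
  obtain ⟨t, ht⟩ := key Y hY
  exact ⟨s, t, by rw [hs, ht, h]⟩

/-- The determinant of an circulant of order sixteen is the product of the values at the roots of unity. -/
lemma det_circ (a : Fin 16 → ℤ) :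
    (((circMatrix a).det : ℤ) : ℂ) = ∏ l : Fin 16, fpoly a (zeta16 ^ (l : ℕ)) := by
  have hz := zeta16_prim
  set V : Matrix (Fin 16) (Fin 16) ℂ := Matrix.vandermonde (fun l : Fin 16 => zeta16 ^ (l : ℕ))
    with hV
  have hdet : V.det ≠ 0 := by
    rw [hV, Matrix.det_vandermonde_ne_zero_iff]
    intro i j hij
    exact Fin.ext (hz.pow_inj i.2 j.2 hij)
  have hmul : V * (circMatrix a).map (Int.castRingHom ℂ) =
      Matrix.diagonal (fun l : Fin 16 => fpoly a (zeta16 ^ (l : ℕ))) * V := by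
    ext l j
    rw [Matrix.diagonal_mul, Matrix.mul_apply]
    have hw : (zeta16 ^ (l : ℕ)) ^ 16 = 1 := by
      rw [← pow_mul, mul_comm, pow_mul, hz.pow_eq_one, one_pow]
    simp only [hV, Matrix.vandermonde_apply, Matrix.map_apply, circMatrix, fpoly]
    generalize zeta16 ^ (l : ℕ) = w at hw
    rw [Finset.sum_mul, ← Equiv.sum_comp (Equiv.addRight j)]
    refine Finset.sum_congr rfl fun k _ => ?_
    have : w ^ ((k + j : Fin 16) : ℕ) = w ^ (k : ℕ) * w ^ (j : ℕ) := by
      rw [Fin.val_add, ← pow_add, ← pow_eq_pow_mod _ hw]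
    simp only [Equiv.coe_addRight, add_sub_cancel_right, this]
    simp only [eq_intCast]
    ring
  have h := congrArg Matrix.det hmul
  rw [Matrix.det_mul, Matrix.det_mul, Matrix.det_diagonal, mul_comm] at h
  have h' := mul_right_cancel₀ hdet h
  rw [← h', ← RingHom.mapMatrix_apply, ← RingHom.map_det]
  simp

def acoef (s t : ℤ) : Fin 16 → ℤ :=
  ![1 + t, 1 + t, 1 + s + t, s - t, -t, -t, -s - t, t - s,
    t, t, 1 + s + t, s - t, -t, -t, -s - t, t - s]

lemma fpoly_acoef (s t : ℤ) (w : ℂ) : fpoly (acoef s t) w =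
    1 + w + w ^ 2 + w ^ 10 +
      (1 - w ^ 4) * (1 + w ^ 8) * (t + t * w + (s + t) * w ^ 2 + (s - t) * w ^ 3) := by
  simp [fpoly, acoef, Fin.sum_univ_succ]
  ring

lemma fpoly_acoef_16 (s t : ℤ) (w : ℂ) (hw : w ^ 8 = -1) : fpoly (acoef s t) w = 1 + w := by
  rw [fpoly_acoef, show w ^ 10 = w ^ 8 * w ^ 2 by ring, hw]; ring

lemma fpoly_acoef_8 (s t : ℤ) (w : ℂ) (hw : w ^ 4 = -1) : fpoly (acoef s t) w =
    (1 + w) * w ^ 2 * ((1 + 4 * s) - (1 + 4 * t) * (w + w ^ 3)) := by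
  rw [fpoly_acoef, show w ^ 10 = (w ^ 4) ^ 2 * w ^ 2 by ring, show w ^ 8 = (w ^ 4) ^ 2 by ring, hw]
  linear_combination (1 + 4 * t) * (1 + w + w ^ 2) * hw

lemma fpoly_acoef_4 (s t : ℤ) (w : ℂ) (hw : w ^ 2 = -1) : fpoly (acoef s t) w = w - 1 := by
  rw [fpoly_acoef, show w ^ 10 = (w ^ 2) ^ 5 by ring, show w ^ 4 = (w ^ 2) ^ 2 by ring, hw]; ring

lemma det_acoef (s t : ℤ) : (circMatrix (acoef s t)).det =
    64 * ((1 + 4 * s) ^ 2 + 2 * (1 + 4 * t) ^ 2) ^ 2 := by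
  have h8 : zeta16 ^ 8 = -1 := by
    have h := (zeta16_prim.pow (by norm_num) (by norm_num : 16 = 8 * 2)).eq_neg_one_of_two_right
    exact h
  have hodd : ∀ l : ℕ, l % 2 = 1 → (zeta16 ^ l) ^ 8 = -1 := by
    intro l hl
    rw [← pow_mul, mul_comm, pow_mul, h8, Odd.neg_one_pow (Nat.odd_iff.2 hl)]
  have h2 : ∀ l : ℕ, l % 2 = 1 → (zeta16 ^ (2 * l)) ^ 4 = -1 := by
    intro l hl
    rw [← hodd l hl, ← pow_mul, ← pow_mul]; ring_nf
  have h4 : ∀ l : ℕ, l % 2 = 1 → (zeta16 ^ (4 * l)) ^ 2 = -1 := by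
    intro l hl
    rw [← hodd l hl, ← pow_mul, ← pow_mul]; ring_nf
  have e0 : fpoly (acoef s t) (zeta16 ^ 0) = 4 := by rw [fpoly_acoef]; ring
  have e8 : fpoly (acoef s t) (zeta16 ^ 8) = 2 := by rw [h8, fpoly_acoef]; ring
  have red : ∀ k : ℕ, zeta16 ^ (8 + k) = - zeta16 ^ k := by
    intro k; rw [pow_add, h8]; ring
  have p4 : fpoly (acoef s t) (zeta16 ^ 4) * fpoly (acoef s t) (zeta16 ^ 12) = 2 := by
    rw [fpoly_acoef_4 s t _ (h4 1 rfl), fpoly_acoef_4 s t _ (h4 3 rfl), red 4]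
    linear_combination -h8
  have p16 : fpoly (acoef s t) (zeta16 ^ 1) * fpoly (acoef s t) (zeta16 ^ 3) *
      fpoly (acoef s t) (zeta16 ^ 5) * fpoly (acoef s t) (zeta16 ^ 7) *
      fpoly (acoef s t) (zeta16 ^ 9) * fpoly (acoef s t) (zeta16 ^ 11) *
      fpoly (acoef s t) (zeta16 ^ 13) * fpoly (acoef s t) (zeta16 ^ 15) = 2 := by
    rw [fpoly_acoef_16 s t _ (hodd 1 rfl), fpoly_acoef_16 s t _ (hodd 3 rfl),
      fpoly_acoef_16 s t _ (hodd 5 rfl), fpoly_acoef_16 s t _ (hodd 7 rfl),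
      fpoly_acoef_16 s t _ (hodd 9 rfl), fpoly_acoef_16 s t _ (hodd 11 rfl),
      fpoly_acoef_16 s t _ (hodd 13 rfl), fpoly_acoef_16 s t _ (hodd 15 rfl),
      red 1, red 3, red 5, red 7]
    have a1 : (1 - zeta16 ^ 2) * (1 - zeta16 ^ 10) = 1 - zeta16 ^ 4 := by
      rw [red 2]; ring
    have a2 : (1 - zeta16 ^ 6) * (1 - zeta16 ^ 14) = 1 + zeta16 ^ 4 := by
      rw [red 6]; linear_combination (-zeta16 ^ 4) * h8
    calc _ = ((1 - zeta16 ^ 2) * (1 - zeta16 ^ 10)) * ((1 - zeta16 ^ 6) * (1 - zeta16 ^ 14)) := by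
          ring
      _ = 2 := by rw [a1, a2]; linear_combination -h8
  have p8 : fpoly (acoef s t) (zeta16 ^ 2) * fpoly (acoef s t) (zeta16 ^ 6) *
      fpoly (acoef s t) (zeta16 ^ 10) * fpoly (acoef s t) (zeta16 ^ 14) =
      2 * ((1 + 4 * s) ^ 2 + 2 * (1 + 4 * t) ^ 2) ^ 2 := by
    rw [fpoly_acoef_8 s t _ (h2 1 rfl), fpoly_acoef_8 s t _ (h2 3 rfl),
      fpoly_acoef_8 s t _ (h2 5 rfl), fpoly_acoef_8 s t _ (h2 7 rfl), red 2, red 6]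
    have hq : (zeta16 ^ 2) ^ 4 = -1 := h2 1 rfl
    rw [show zeta16 ^ 6 = (zeta16 ^ 2) ^ 3 by ring]
    generalize zeta16 ^ 2 = q at hq
    have c9 : (q ^ 3) ^ 3 = q := by linear_combination (q ^ 5 - q) * hq
    have b1 : ∀ x y : ℂ, (x - y * (q + q ^ 3)) * (x - y * (-q + (-q) ^ 3)) =
        x ^ 2 + 2 * y ^ 2 := by
      intro x y; linear_combination (-y ^ 2 * (q ^ 2 + 2)) * hq
    have b2 : (1 + q) * (1 + q ^ 3) * (1 + -q) * (1 + -q ^ 3) = 2 := by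
      linear_combination (q ^ 4 - 1 - q ^ 2) * hq
    have b3 : q ^ 2 * (q ^ 3) ^ 2 * (-q) ^ 2 * (-q ^ 3) ^ 2 = 1 := by
      linear_combination (q ^ 12 - q ^ 8 + q ^ 4 - 1) * hq
    have c9' : (-q ^ 3) ^ 3 = -q := by linear_combination - c9
    rw [c9, c9']
    generalize (1 + 4 * (s : ℂ)) = x
    generalize (1 + 4 * (t : ℂ)) = y
    calc _ = ((1 + q) * (1 + q ^ 3) * (1 + -q) * (1 + -q ^ 3)) *
          (q ^ 2 * (q ^ 3) ^ 2 * (-q) ^ 2 * (-q ^ 3) ^ 2) *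
          ((x - y * (q + q ^ 3)) * (x - y * (-q + (-q) ^ 3))) ^ 2 := by ring
      _ = _ := by rw [b1, b2, b3]; ring
  have hcast : (((circMatrix (acoef s t)).det : ℤ) : ℂ) =
      ((64 * ((1 + 4 * s) ^ 2 + 2 * (1 + 4 * t) ^ 2) ^ 2 : ℤ) : ℂ) := by
    rw [det_circ, Fin.prod_univ_eq_prod_range (fun l => fpoly (acoef s t) (zeta16 ^ l)) 16]
    simp only [Finset.prod_range_succ, Finset.prod_range_zero, one_mul]
    push_cast
    generalize fpoly (acoef s t) = F at *
    calc _ = F (zeta16 ^ 0) * F (zeta16 ^ 8) * (F (zeta16 ^ 4) * F (zeta16 ^ 12)) *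
          (F (zeta16 ^ 2) * F (zeta16 ^ 6) * F (zeta16 ^ 10) * F (zeta16 ^ 14)) *
          (F (zeta16 ^ 1) * F (zeta16 ^ 3) * F (zeta16 ^ 5) * F (zeta16 ^ 7) *
            F (zeta16 ^ 9) * F (zeta16 ^ 11) * F (zeta16 ^ 13) * F (zeta16 ^ 15)) := by
          ac_rfl
      _ = _ := by rw [e0, e8, p4, p8, p16]; ring
  exact_mod_cast hcast

theorem sixty_four_p_sq_mem_S16_of_three_mod_eight (p : ℕ) (hp : p.Prime) (h3 : p % 8 = 3) :
    (64 * (p : ℤ) ^ 2) ∈ S16 := by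
  obtain ⟨X, Y, h⟩ := p_repr p hp h3
  obtain ⟨s, t, h⟩ := p_repr_mod p h3 X Y h
  exact ⟨acoef s t, by rw [det_acoef, h]⟩
end

section
/- If p is a prime such that p ≡ 1 (mod 8) and p = a² + b² for some integers a, b with both a + b and a − b congruent to 3 or −3 modulo 8, then 64p ∈ S(16). -/
open Complex Finset

namespace C16

/-- Elements of `ℤ[ζ₈]` in the basis `1, ζ, ζ², ζ³`. -/
@[ext] structure Z8 where
  x0 : ℤ
  x1 : ℤ
  x2 : ℤ
  x3 : ℤ

def mul (x y : Z8) : Z8 :=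
  ⟨x.x0 * y.x0 - x.x1 * y.x3 - x.x2 * y.x2 - x.x3 * y.x1,
   x.x0 * y.x1 + x.x1 * y.x0 - x.x2 * y.x3 - x.x3 * y.x2,
   x.x0 * y.x2 + x.x1 * y.x1 + x.x2 * y.x0 - x.x3 * y.x3,
   x.x0 * y.x3 + x.x1 * y.x2 + x.x2 * y.x1 + x.x3 * y.x0⟩

def sub (x y : Z8) : Z8 := ⟨x.x0 - y.x0, x.x1 - y.x1, x.x2 - y.x2, x.x3 - y.x3⟩

/-- real and imaginary part of the relative norm to `ℤ[i]` -/
def cc (x : Z8) : ℤ := x.x0 ^ 2 - x.x2 ^ 2 + 2 * x.x1 * x.x3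
def dd (x : Z8) : ℤ := 2 * x.x0 * x.x2 - x.x1 ^ 2 + x.x3 ^ 2
def N (x : Z8) : ℤ := cc x ^ 2 + dd x ^ 2
def ga (x : Z8) : Z8 := mul ⟨x.x0, -x.x1, x.x2, -x.x3⟩ ⟨cc x, 0, -dd x, 0⟩
def ev (r : ℤ) (x : Z8) : ℤ := x.x0 + x.x1 * r + x.x2 * r ^ 2 + x.x3 * r ^ 3

lemma N_eq (x : Z8) : N x = (x.x0 ^ 2 + x.x1 ^ 2 + x.x2 ^ 2 + x.x3 ^ 2) ^ 2
    - 2 * (x.x0 * x.x1 + x.x1 * x.x2 + x.x2 * x.x3 - x.x3 * x.x0) ^ 2 := by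
  simp only [N, cc, dd]; ring

lemma cc_mul (x y : Z8) : cc (mul x y) = cc x * cc y - dd x * dd y := by
  simp only [cc, dd, mul]; ring

lemma dd_mul (x y : Z8) : dd (mul x y) = cc x * dd y + dd x * cc y := by
  simp only [cc, dd, mul]; ring

lemma N_mul (x y : Z8) : N (mul x y) = N x * N y := by
  simp only [N, cc_mul, dd_mul]; ring

lemma mul_ga (x : Z8) : mul x (ga x) = ⟨N x, 0, 0, 0⟩ := by
  ext <;> simp only [N, ga, mul, cc, dd] <;> ring

lemma N_ga (x : Z8) : N (ga x) = N x ^ 3 := by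
  rw [ga, N_mul]; simp only [N, cc, dd]; ring

lemma N_nonneg (x : Z8) : 0 ≤ N x := by unfold N; positivity

lemma sq_two (A B : ℤ) (h : A ^ 2 = 2 * B ^ 2) : A = 0 := by
  by_contra hA
  have hB : B ≠ 0 := by rintro rfl; simp at h; exact hA h
  have h2 : ((A / B : ℚ)) ^ 2 = 2 := by
    have hB' : (B : ℚ) ≠ 0 := by exact_mod_cast hB
    field_simp
    exact_mod_cast (by linarith : A ^ 2 = B ^ 2 * 2)
  have h3 : IsSquare (2 : ℚ) := ⟨A / B, by rw [← h2]; ring⟩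
  have h4 : IsSquare (2 : ℕ) := by
    have : IsSquare ((2 : ℕ) : ℚ) := by simpa using h3
    exact Rat.isSquare_natCast_iff.mp this
  obtain ⟨k, hk⟩ := h4
  have : k < 2 := by nlinarith
  interval_cases k <;> omega

lemma N_zero (x : Z8) (h : N x = 0) : x = ⟨0, 0, 0, 0⟩ := by
  rw [N_eq] at h
  have hA := sq_two _ _ (sub_eq_zero.mp h)
  have h0 : x.x0 = 0 := by nlinarith [sq_nonneg x.x0, sq_nonneg x.x1, sq_nonneg x.x2, sq_nonneg x.x3]
  have h1 : x.x1 = 0 := by nlinarith [sq_nonneg x.x0, sq_nonneg x.x1, sq_nonneg x.x2, sq_nonneg x.x3]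
  have h2 : x.x2 = 0 := by nlinarith [sq_nonneg x.x0, sq_nonneg x.x1, sq_nonneg x.x2, sq_nonneg x.x3]
  have h3 : x.x3 = 0 := by nlinarith [sq_nonneg x.x0, sq_nonneg x.x1, sq_nonneg x.x2, sq_nonneg x.x3]
  ext <;> assumption

lemma assoc' (t q a g : Z8) : mul (sub t (mul q a)) g = sub (mul t g) (mul q (mul a g)) := by
  ext <;> simp only [mul, sub] <;> ring

lemma round (n : ℤ) (hn : 0 < n) (T : ℤ) : ∃ q, |2 * (T - q * n)| ≤ n := by
  refine ⟨(2 * T + n) / (2 * n), ?_⟩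
  have h1 := Int.emod_add_mul_ediv (2 * T + n) (2 * n)
  have h2 := Int.emod_nonneg (2 * T + n) (show 2 * n ≠ 0 by omega)
  have h3 := Int.emod_lt_of_pos (2 * T + n) (show 0 < 2 * n by omega)
  rw [abs_le]
  constructor <;> nlinarith

lemma small (w : Z8) (n : ℤ) (hn : 0 < n) (h0 : |2 * w.x0| ≤ n) (h1 : |2 * w.x1| ≤ n)
    (h2 : |2 * w.x2| ≤ n) (h3 : |2 * w.x3| ≤ n) : N w < n ^ 4 := by
  have k0 := sq_le_sq' (abs_le.mp h0).1 (abs_le.mp h0).2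
  have k1 := sq_le_sq' (abs_le.mp h1).1 (abs_le.mp h1).2
  have k2 := sq_le_sq' (abs_le.mp h2).1 (abs_le.mp h2).2
  have k3 := sq_le_sq' (abs_le.mp h3).1 (abs_le.mp h3).2
  rw [N_eq]
  set A := w.x0 ^ 2 + w.x1 ^ 2 + w.x2 ^ 2 + w.x3 ^ 2 with hA
  set B := w.x0 * w.x1 + w.x1 * w.x2 + w.x2 * w.x3 - w.x3 * w.x0 with hB
  have hA0 : 0 ≤ A := by positivity
  have hA1 : A ≤ n ^ 2 := by linarith
  rcases lt_or_eq_of_le hA1 with h | h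
  · have h4 : A ^ 2 < (n ^ 2) ^ 2 := pow_lt_pow_left₀ h hA0 (by norm_num)
    have h5 : (n ^ 2) ^ 2 = n ^ 4 := by ring
    linarith [sq_nonneg B]
  · have hB0 : B ≠ 0 := by
      have e0 : (2 * w.x0) ^ 2 = n ^ 2 := by linarith
      have e1 : (2 * w.x1) ^ 2 = n ^ 2 := by linarith
      have e2 : (2 * w.x2) ^ 2 = n ^ 2 := by linarith
      have e3 : (2 * w.x3) ^ 2 = n ^ 2 := by linarith
      have hne : 0 < n ^ 2 := by positivity
      intro hz
      have hz4 : (2 * w.x0) * (2 * w.x1) + (2 * w.x1) * (2 * w.x2) + (2 * w.x2) * (2 * w.x3)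
        - (2 * w.x3) * (2 * w.x0) = 0 := by linarith
      rcases sq_eq_sq_iff_eq_or_eq_neg.mp e0 with f0 | f0 <;>
      rcases sq_eq_sq_iff_eq_or_eq_neg.mp e1 with f1 | f1 <;>
      rcases sq_eq_sq_iff_eq_or_eq_neg.mp e2 with f2 | f2 <;>
      rcases sq_eq_sq_iff_eq_or_eq_neg.mp e3 with f3 | f3 <;>
      rw [f0, f1, f2, f3] at hz4 <;> linarith
    have : 0 < B ^ 2 := by positivity
    have h5 : (n ^ 2) ^ 2 = n ^ 4 := by ring
    rw [h]; linarith

/-- division with remainder -/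
lemma euclid (t a : Z8) (ha : 0 < N a) : ∃ q, N (sub t (mul q a)) < N a := by
  obtain ⟨q0, h0⟩ := round (N a) ha (mul t (ga a)).x0
  obtain ⟨q1, h1⟩ := round (N a) ha (mul t (ga a)).x1
  obtain ⟨q2, h2⟩ := round (N a) ha (mul t (ga a)).x2
  obtain ⟨q3, h3⟩ := round (N a) ha (mul t (ga a)).x3
  refine ⟨⟨q0, q1, q2, q3⟩, ?_⟩
  have key := N_mul (sub t (mul ⟨q0, q1, q2, q3⟩ a)) (ga a)
  rw [assoc', mul_ga, N_ga] at key
  have hs := small (sub (mul t (ga a)) (mul ⟨q0, q1, q2, q3⟩ ⟨N a, 0, 0, 0⟩)) (N a) ha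
    (by simpa [sub, mul] using h0) (by simpa [sub, mul] using h1)
    (by simpa [sub, mul] using h2) (by simpa [sub, mul] using h3)
  rw [key] at hs
  have h4 : N a ^ 4 = N a * N a ^ 3 := by ring
  rw [h4] at hs
  exact lt_of_mul_lt_mul_right hs (by positivity)

lemma ev_mul (r m : ℤ) (hr : m ∣ r ^ 4 + 1) (x y : Z8) : m ∣ ev r (mul x y) - ev r x * ev r y := by
  obtain ⟨k, hk⟩ := hr
  refine ⟨-k * (x.x1 * y.x3 + x.x2 * y.x2 + x.x3 * y.x1 + (x.x2 * y.x3 + x.x3 * y.x2) * r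
    + x.x3 * y.x3 * r ^ 2), ?_⟩
  simp only [ev, mul]
  linear_combination (-(x.x1 * y.x3 + x.x2 * y.x2 + x.x3 * y.x1 + (x.x2 * y.x3 + x.x3 * y.x2) * r
    + x.x3 * y.x3 * r ^ 2)) * hk

lemma ev_mul_dvd (r m : ℤ) (hr : m ∣ r ^ 4 + 1) (x y : Z8) (h : m ∣ ev r x ∨ m ∣ ev r y) :
    m ∣ ev r (mul x y) := by
  have h1 := ev_mul r m hr x y
  have h2 : m ∣ ev r x * ev r y := by
    rcases h with h | h
    · exact h.mul_right _
    · exact h.mul_left _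
  have := dvd_add h1 h2
  simpa using this

lemma ev_sub (r : ℤ) (x y : Z8) : ev r (sub x y) = ev r x - ev r y := by
  simp only [ev, sub]; ring

/-- a generator of the ideal -/
lemma gen (p r : ℤ) (hp : p ≠ 0) (hr : p ∣ r ^ 4 + 1) :
    ∃ a : Z8, p ∣ N a ∧ ∀ t, p ∣ ev r t → N a ∣ N t := by
  classical
  have hex : ∃ n : ℕ, ∃ a : Z8, p ∣ ev r a ∧ N a = n ∧ 0 < n := by
    refine ⟨(p ^ 4).toNat, ⟨p, 0, 0, 0⟩, by simp [ev], ?_, ?_⟩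
    · have : 0 ≤ p ^ 4 := by positivity
      rw [Int.toNat_of_nonneg this]; simp only [N, cc, dd]; ring
    · have : 0 < p ^ 4 := by positivity
      omega
  obtain ⟨a, ha, hn, hpos⟩ := Nat.find_spec hex
  have hmin := fun m => Nat.find_min (m := m) hex
  have hNpos : 0 < N a := by rw [hn]; exact_mod_cast hpos
  refine ⟨a, ?_, ?_⟩
  · have h := ev_mul_dvd r p hr a (ga a) (Or.inl ha)
    rw [mul_ga] at h
    simpa [ev] using h
  · intro t ht
    obtain ⟨q, hq⟩ := euclid t a hNpos
    have hz : N (sub t (mul q a)) = 0 := by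
      by_contra hne
      have hnn := N_nonneg (sub t (mul q a))
      refine hmin (N (sub t (mul q a))).toNat (by omega) ⟨sub t (mul q a), ?_, ?_, by omega⟩
      · rw [ev_sub]
        exact dvd_sub ht (ev_mul_dvd r p hr q a (Or.inr ha))
      · omega
    have hz' := N_zero _ hz
    have : t = mul q a := by
      simp only [sub, Z8.mk.injEq] at hz'
      obtain ⟨z0, z1, z2, z3⟩ := hz'
      ext <;> linarith
    rw [this, N_mul]
    exact Dvd.intro_left _ rfl

lemma exists_root (p : ℕ) (hp : p.Prime) (h1 : p % 8 = 1) : ∃ r : ℤ, (p : ℤ) ∣ r ^ 4 + 1 := by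
  have := Fact.mk hp
  have hp2 : ringChar (ZMod p) ≠ 2 := by
    rw [ZMod.ringChar_zmod_n]; rintro rfl; omega
  obtain ⟨z, hz⟩ := FiniteField.exists_nonsquare hp2
  have hz0 : z ≠ 0 := by rintro rfl; exact hz (IsSquare.zero)
  have h3 : z ^ (p / 2) = -1 := by
    rcases ZMod.pow_div_two_eq_neg_one_or_one p hz0 with h | h
    · exact absurd ((ZMod.euler_criterion p hz0).mpr h) hz
    · exact h
  refine ⟨((z ^ (p / 8)).val : ℤ), ?_⟩
  rw [← ZMod.intCast_zmod_eq_zero_iff_dvd]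
  push_cast
  rw [ZMod.natCast_zmod_val, ← pow_mul, show p / 8 * 4 = p / 2 by omega, h3]
  ring

lemma exists_root' (p : ℕ) (hp : p.Prime) (h1 : p % 8 = 1) :
    ∃ r : ℤ, (p : ℤ) ∣ r ^ 4 + 1 ∧ ¬ ((p : ℤ) ^ 2 ∣ r ^ 4 + 1) := by
  obtain ⟨r, hr⟩ := exists_root p hp h1
  by_cases h : (p : ℤ) ^ 2 ∣ r ^ 4 + 1
  · refine ⟨r + p, ?_, ?_⟩
    · have : (r + p : ℤ) ^ 4 + 1 = (r ^ 4 + 1) + p * (4 * r ^ 3 + 6 * r ^ 2 * p + 4 * r * p ^ 2 + p ^ 3) := by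
        ring
      rw [this]; exact dvd_add hr (Dvd.intro _ rfl)
    · intro h'
      have hpp : Prime (p : ℤ) := Nat.prime_iff_prime_int.mp hp
      have hp0 : (p : ℤ) ≠ 0 := hpp.ne_zero
      have h2 : (p : ℤ) ^ 2 ∣ p * (4 * r ^ 3) := by
        have e : (p : ℤ) * (4 * r ^ 3) = ((r + p) ^ 4 + 1) - (r ^ 4 + 1)
          - p ^ 2 * (6 * r ^ 2 + 4 * r * p + p ^ 2) := by ring
        rw [e]; exact dvd_sub (dvd_sub h' h) (Dvd.intro _ rfl)
      rw [sq] at h2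
      have h3 := (mul_dvd_mul_iff_left hp0).mp h2
      have h5 : ¬ (p : ℤ) ∣ r := by
        intro hd
        have : (p : ℤ) ∣ 1 := by
          have := dvd_sub hr (hd.pow (n := 4) (by norm_num))
          simpa using this
        exact hpp.not_isUnit (isUnit_of_dvd_one this)
      rcases hpp.dvd_or_dvd h3 with h4 | h4
      · have h6 : (p : ℤ) ∣ 2 ^ 2 := by simpa using h4
        have h7 := hpp.dvd_of_dvd_pow h6
        have := Int.le_of_dvd (by norm_num) h7
        have := hp.two_le
        omega
      · exact h5 (hpp.dvd_of_dvd_pow h4)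
  · exact ⟨r, hr, h⟩

lemma exists_norm (p : ℕ) (hp : p.Prime) (h1 : p % 8 = 1) : ∃ a : Z8, N a = p := by
  obtain ⟨r, hr, hr2⟩ := exists_root' p hp h1
  have hp0 : (p : ℤ) ≠ 0 := by exact_mod_cast hp.ne_zero
  obtain ⟨a, ha, hdv⟩ := gen p r hp0 hr
  refine ⟨a, ?_⟩
  have d1 : N a ∣ r ^ 4 + 1 := by
    have := hdv ⟨r, -1, 0, 0⟩ (by simp [ev])
    have e : N ⟨r, -1, 0, 0⟩ = r ^ 4 + 1 := by simp only [N, cc, dd]; ring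
    rwa [e] at this
  have d2 : N a ∣ (p : ℤ) ^ 4 := by
    have := hdv ⟨p, 0, 0, 0⟩ (by simp [ev])
    have e : N ⟨p, 0, 0, 0⟩ = (p : ℤ) ^ 4 := by simp only [N, cc, dd]; ring
    rwa [e] at this
  have hnn := N_nonneg a
  obtain ⟨n, hn⟩ := Int.eq_ofNat_of_zero_le hnn
  rw [hn] at d1 d2 ha ⊢
  have d3 : n ∣ p ^ 4 := by exact_mod_cast d2
  obtain ⟨k, hk, rfl⟩ := (Nat.dvd_prime_pow hp).mp d3
  have hk1 : k ≠ 0 := by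
    rintro rfl
    have : p ∣ 1 := by exact_mod_cast ha
    exact hp.one_lt.ne' (Nat.dvd_one.mp this)
  have hk2 : k < 2 := by
    by_contra hlt
    apply hr2
    refine dvd_trans ?_ d1
    push_cast
    exact pow_dvd_pow _ (by omega)
  have : k = 1 := by omega
  subst this
  simp

lemma uniq_aux (p : ℤ) (hp : 0 < p) (a b c d : ℤ) (h : p = a ^ 2 + b ^ 2) (h' : p = c ^ 2 + d ^ 2)
    (hd : p ∣ a * d - b * c) : (a ^ 2 = c ^ 2 ∧ b ^ 2 = d ^ 2) ∨ (a ^ 2 = d ^ 2 ∧ b ^ 2 = c ^ 2) := by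
  obtain ⟨k, hk⟩ := hd
  have e : (a * d - b * c) ^ 2 + (a * c + b * d) ^ 2 = p ^ 2 := by
    calc _ = (a ^ 2 + b ^ 2) * (c ^ 2 + d ^ 2) := by ring
      _ = p ^ 2 := by rw [← h, ← h']; ring
  rw [hk] at e
  have hp2 : 0 < p ^ 2 := by positivity
  by_cases hk0 : k = 0
  · left
    have e1 : a * d = b * c := by rw [hk0] at hk; linarith
    have e2 : p * (b ^ 2 - d ^ 2) = 0 := by
      have : p * (b ^ 2 - d ^ 2) = b ^ 2 * (c ^ 2 + d ^ 2) - d ^ 2 * (a ^ 2 + b ^ 2) := by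
        rw [← h, ← h']; ring
      rw [this]
      linear_combination (-(a * d) - b * c) * e1
    rcases mul_eq_zero.mp e2 with h0 | h0
    · omega
    · constructor <;> linarith
  · right
    have hk1 : 1 ≤ k ^ 2 := by
      have : 0 < k ^ 2 := by positivity
      omega
    have e0 : (a * c + b * d) ^ 2 = 0 := by nlinarith [sq_nonneg (a * c + b * d)]
    have e1 : a * c + b * d = 0 := by simpa using e0
    have e2 : p * (a ^ 2 - d ^ 2) = 0 := by
      have : p * (a ^ 2 - d ^ 2) = a ^ 2 * (c ^ 2 + d ^ 2) - d ^ 2 * (a ^ 2 + b ^ 2) := by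
        rw [← h, ← h']; ring
      rw [this]
      linear_combination (a * c - b * d) * e1
    rcases mul_eq_zero.mp e2 with h0 | h0
    · omega
    · constructor <;> linarith

lemma uniq (p : ℕ) (hp : p.Prime) (a b c d : ℤ) (h : (p : ℤ) = a ^ 2 + b ^ 2)
    (h' : (p : ℤ) = c ^ 2 + d ^ 2) :
    (a ^ 2 = c ^ 2 ∧ b ^ 2 = d ^ 2) ∨ (a ^ 2 = d ^ 2 ∧ b ^ 2 = c ^ 2) := by
  have hpp : Prime (p : ℤ) := Nat.prime_iff_prime_int.mp hp
  have hpos : (0 : ℤ) < p := by exact_mod_cast hp.pos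
  have hd : (p : ℤ) ∣ (a * d - b * c) * (a * d - b * (-c)) := by
    refine ⟨d ^ 2 - b ^ 2, ?_⟩
    linear_combination b ^ 2 * h' - d ^ 2 * h
  rcases hpp.dvd_or_dvd hd with h0 | h0
  · exact uniq_aux p hpos a b c d h h' h0
  · simpa using uniq_aux p hpos a b (-c) d h (by rw [h']; ring) h0

/-- residues `± 3` mod `8` -/
def R3 (c : ℤ) : Prop := c % 8 = 3 ∨ c % 8 = 5

lemma exists_beta (p : ℕ) (hp : p.Prime) (h1 : p % 8 = 1)
    (a b : ℤ) (hab : (p : ℤ) = a ^ 2 + b ^ 2) (hsum : R3 (a + b)) (hdiff : R3 (a - b)) :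
    ∃ x : Z8, N x = 2 * p ∧ R3 (cc x) ∧ R3 (dd x) := by
  obtain ⟨x, hx⟩ := exists_norm p hp h1
  refine ⟨mul ⟨1, 1, 0, 0⟩ x, ?_, ?_⟩
  · rw [N_mul, hx]; simp [N, cc, dd]
  · have hu := uniq p hp a b (cc x) (dd x) hab hx.symm
    have e1 : cc (mul ⟨1, 1, 0, 0⟩ x) = cc x + dd x := by rw [cc_mul]; simp [cc, dd]; ring
    have e2 : dd (mul ⟨1, 1, 0, 0⟩ x) = dd x - cc x := by rw [dd_mul]; simp [cc, dd]; ring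
    rw [e1, e2]
    unfold R3 at *
    generalize cc x = c at *
    generalize dd x = d at *
    rcases hu with ⟨h, h'⟩ | ⟨h, h'⟩ <;>
    rcases sq_eq_sq_iff_eq_or_eq_neg.mp h with f | f <;>
    rcases sq_eq_sq_iff_eq_or_eq_neg.mp h' with g | g <;> subst f <;> subst g <;> omega

lemma parity (x : Z8) (h : R3 (cc x)) (h' : R3 (dd x)) :
    (x.x0 % 2 = 1 ∧ x.x1 % 2 = 1 ∧ x.x2 % 2 = 0 ∧ x.x3 % 2 = 0) ∨
    (x.x1 % 2 = 1 ∧ x.x2 % 2 = 1 ∧ x.x3 % 2 = 0 ∧ x.x0 % 2 = 0) ∨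
    (x.x2 % 2 = 1 ∧ x.x3 % 2 = 1 ∧ x.x0 % 2 = 0 ∧ x.x1 % 2 = 0) ∨
    (x.x3 % 2 = 1 ∧ x.x0 % 2 = 1 ∧ x.x1 % 2 = 0 ∧ x.x2 % 2 = 0) := by
  obtain ⟨x0, x1, x2, x3⟩ := x
  simp only [R3, cc, dd] at *
  have c1 : (x0 ^ 2 - x2 ^ 2 + 2 * x1 * x3) % 2 = (x0 + x2) % 2 := by
    have : (x0 ^ 2 - x2 ^ 2 + 2 * x1 * x3) = (x0 + x2) + (x0 ^ 2 - x0) - (x2 ^ 2 + x2) + 2 * (x1 * x3) := by ring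
    have e1 : (x0 ^ 2 - x0) % 2 = 0 := by
      rcases Int.even_or_odd' x0 with ⟨k, rfl | rfl⟩ <;> ring_nf <;> omega
    have e2 : (x2 ^ 2 + x2) % 2 = 0 := by
      rcases Int.even_or_odd' x2 with ⟨k, rfl | rfl⟩ <;> ring_nf <;> omega
    omega
  have c2 : (2 * x0 * x2 - x1 ^ 2 + x3 ^ 2) % 2 = (x1 + x3) % 2 := by
    have : (2 * x0 * x2 - x1 ^ 2 + x3 ^ 2) = (x1 + x3) - (x1 ^ 2 + x1) + (x3 ^ 2 - x3) + 2 * (x0 * x2) := by ring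
    have e1 : (x1 ^ 2 + x1) % 2 = 0 := by
      rcases Int.even_or_odd' x1 with ⟨k, rfl | rfl⟩ <;> ring_nf <;> omega
    have e2 : (x3 ^ 2 - x3) % 2 = 0 := by
      rcases Int.even_or_odd' x3 with ⟨k, rfl | rfl⟩ <;> ring_nf <;> omega
    omega
  omega

lemma step1 (x : Z8) (h : R3 (cc x)) (h' : R3 (dd x)) :
    ∃ y : Z8, N y = N x ∧ R3 (cc y) ∧ y.x0 % 2 = 1 ∧ y.x1 % 2 = 1 ∧ y.x2 % 2 = 0 ∧ y.x3 % 2 = 0 := by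
  have hneg : ∀ c, R3 c → R3 (-c) := by intro c hc; unfold R3 at *; omega
  rcases parity x h h' with ⟨a, b, c, d⟩ | ⟨a, b, c, d⟩ | ⟨a, b, c, d⟩ | ⟨a, b, c, d⟩
  · exact ⟨x, rfl, h, a, b, c, d⟩
  · refine ⟨⟨x.x1, x.x2, x.x3, -x.x0⟩, ?_, ?_, a, b, c, ?_⟩
    · simp only [N, cc, dd]; ring
    · have : cc ⟨x.x1, x.x2, x.x3, -x.x0⟩ = -dd x := by simp only [cc, dd]; ring
      rw [this]; exact hneg _ h'
    · simp only; omega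
  · refine ⟨⟨x.x2, x.x3, -x.x0, -x.x1⟩, ?_, ?_, a, b, ?_, ?_⟩
    · simp only [N, cc, dd]; ring
    · have : cc ⟨x.x2, x.x3, -x.x0, -x.x1⟩ = -cc x := by simp only [cc]; ring
      rw [this]; exact hneg _ h
    · simp only; omega
    · simp only; omega
  · refine ⟨⟨-x.x3, x.x0, x.x1, x.x2⟩, ?_, ?_, ?_, b, c, d⟩
    · simp only [N, cc, dd]; ring
    · have : cc ⟨-x.x3, x.x0, x.x1, x.x2⟩ = dd x := by simp only [cc, dd]; ring
      rw [this]; exact h'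
    · simp only; omega

lemma step2 (x : Z8) (h : R3 (cc x)) (h0 : x.x0 % 2 = 1) (h1 : x.x1 % 2 = 1) (h2 : x.x2 % 2 = 0)
    (h3 : x.x3 % 2 = 0) :
    ∃ y : Z8, N y = N x ∧ y.x0 % 2 = 1 ∧ y.x1 % 2 = 1 ∧ y.x2 % 4 = 2 ∧ y.x3 % 4 = 0 := by
  have key : (x.x2 + x.x3) % 4 = 2 := by
    obtain ⟨a, ha⟩ : ∃ a, x.x0 = 2 * a + 1 := ⟨x.x0 / 2, by omega⟩
    obtain ⟨b, hb⟩ : ∃ b, x.x1 = 2 * b + 1 := ⟨x.x1 / 2, by omega⟩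
    obtain ⟨c, hc⟩ : ∃ c, x.x2 = 2 * c := ⟨x.x2 / 2, by omega⟩
    obtain ⟨d, hd⟩ : ∃ d, x.x3 = 2 * d := ⟨x.x3 / 2, by omega⟩
    have e : cc x = 1 + 4 * (a ^ 2 + a) - 4 * (c ^ 2 + c) + 4 * (c + d) + 8 * (b * d) := by
      simp only [cc, ha, hb, hc, hd]; ring
    have e1 : (a ^ 2 + a) % 2 = 0 := by
      rcases Int.even_or_odd' a with ⟨k, rfl | rfl⟩ <;> ring_nf <;> omega
    have e2 : (c ^ 2 + c) % 2 = 0 := by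
      rcases Int.even_or_odd' c with ⟨k, rfl | rfl⟩ <;> ring_nf <;> omega
    unfold R3 at h
    omega
  by_cases hc : x.x2 % 4 = 2
  · exact ⟨x, rfl, h0, h1, hc, by omega⟩
  · refine ⟨⟨x.x1, x.x0, -x.x3, -x.x2⟩, ?_, h1, h0, ?_, ?_⟩
    · simp only [N, cc, dd]; ring
    · simp only; omega
    · simp only; omega

lemma step3 (x : Z8) (h0 : x.x0 % 2 = 1) (h1 : x.x1 % 2 = 1) (h2 : x.x2 % 4 = 2)
    (h3 : x.x3 % 4 = 0) :
    ∃ k0 k1 k2 k3 : ℤ, N ⟨1 + 4 * k0, 1 + 4 * k1, 2 + 4 * k2, 4 * k3⟩ = N x := by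
  have main : ∀ y : Z8, N y = N x → y.x0 % 4 = 1 → y.x1 % 4 = 1 → y.x2 % 4 = 2 → y.x3 % 4 = 0 →
      ∃ k0 k1 k2 k3 : ℤ, N ⟨1 + 4 * k0, 1 + 4 * k1, 2 + 4 * k2, 4 * k3⟩ = N x := by
    intro y hy a b c d
    refine ⟨y.x0 / 4, y.x1 / 4, y.x2 / 4, y.x3 / 4, ?_⟩
    rw [← hy]
    congr 1
    ext <;> simp only <;> omega
  by_cases a : x.x0 % 4 = 1 <;> by_cases b : x.x1 % 4 = 1
  · exact main x rfl a b h2 h3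
  · refine main ⟨x.x0, -x.x1, x.x2, -x.x3⟩ (by simp only [N, cc, dd]; ring) ?_ ?_ ?_ ?_ <;>
      simp only <;> omega
  · refine main ⟨-x.x0, x.x1, -x.x2, x.x3⟩ (by simp only [N, cc, dd]; ring) ?_ ?_ ?_ ?_ <;>
      simp only <;> omega
  · refine main ⟨-x.x0, -x.x1, -x.x2, -x.x3⟩ (by simp only [N, cc, dd]; ring) ?_ ?_ ?_ ?_ <;>
      simp only <;> omega

lemma det_blocks {n : ℕ} (A B : Matrix (Fin n) (Fin n) ℤ) :
    (Matrix.fromBlocks A B B A).det = (A + B).det * (A - B).det := by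
  have h : Matrix.fromBlocks (1 : Matrix (Fin n) (Fin n) ℤ) 1 0 1 * Matrix.fromBlocks A B B A
      * Matrix.fromBlocks (1 : Matrix (Fin n) (Fin n) ℤ) (-1) 0 1
      = Matrix.fromBlocks (A + B) 0 B (A - B) := by
    rw [Matrix.fromBlocks_multiply, Matrix.fromBlocks_multiply]
    congr 1 <;> simp <;> abel
  have h2 := congrArg Matrix.det h
  rw [Matrix.det_mul, Matrix.det_mul, Matrix.det_fromBlocks_zero₂₁, Matrix.det_fromBlocks_zero₂₁,
    Matrix.det_fromBlocks_zero₁₂] at h2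
  simpa using h2

lemma det_split {n : ℕ} (M : Matrix (Fin (n + n)) (Fin (n + n)) ℤ)
    (h1 : ∀ i j : Fin n, M (Fin.natAdd n i) (Fin.natAdd n j) = M (Fin.castAdd n i) (Fin.castAdd n j))
    (h2 : ∀ i j : Fin n, M (Fin.natAdd n i) (Fin.castAdd n j) = M (Fin.castAdd n i) (Fin.natAdd n j)) :
    M.det = (Matrix.of fun i j : Fin n => M (Fin.castAdd n i) (Fin.castAdd n j)
        + M (Fin.castAdd n i) (Fin.natAdd n j)).det *
      (Matrix.of fun i j : Fin n => M (Fin.castAdd n i) (Fin.castAdd n j)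
        - M (Fin.castAdd n i) (Fin.natAdd n j)).det := by
  have e : M.submatrix finSumFinEquiv finSumFinEquiv = Matrix.fromBlocks
      (Matrix.of fun i j : Fin n => M (Fin.castAdd n i) (Fin.castAdd n j))
      (Matrix.of fun i j : Fin n => M (Fin.castAdd n i) (Fin.natAdd n j))
      (Matrix.of fun i j : Fin n => M (Fin.castAdd n i) (Fin.natAdd n j))
      (Matrix.of fun i j : Fin n => M (Fin.castAdd n i) (Fin.castAdd n j)) := by
    ext (i | i) (j | j)
    · simp
    · simp
    · simpa using h2 i j
    · simpa using h1 i j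
  rw [← Matrix.det_submatrix_equiv_self finSumFinEquiv M, e, det_blocks]
  rfl

def fam (k0 k1 k2 k3 : ℤ) : Fin 16 → ℤ :=
  ![1 + k0, 1 + k1, 1 + k2, k3, -k0, -k1, -k2, -k3, k0, k1, 1 + k2, k3, -k0, -k1, -k2, -k3]

def fam8 (k0 k1 k2 k3 : ℤ) : Fin 8 → ℤ :=
  ![1 + 2 * k0, 1 + 2 * k1, 2 + 2 * k2, 2 * k3, -2 * k0, -2 * k1, -2 * k2, -2 * k3]

lemma fam_add (k0 k1 k2 k3 : ℤ) : ∀ m : Fin 8,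
    fam k0 k1 k2 k3 (Fin.castAdd 8 m) + fam k0 k1 k2 k3 (Fin.natAdd 8 m) = fam8 k0 k1 k2 k3 m := by
  intro m
  fin_cases m <;> simp [fam, fam8] <;> ring

def E8 : Matrix (Fin 8) (Fin 8) ℤ :=
  !![1,0,0,0,0,0,0,-1; 1,1,0,0,0,0,0,0; 0,1,1,0,0,0,0,0; 0,0,1,1,0,0,0,0;
     0,0,0,1,1,0,0,0; 0,0,0,0,1,1,0,0; 0,0,0,0,0,1,1,0; 0,0,0,0,0,0,1,1]

def L8 : Matrix (Fin 8) (Fin 8) ℤ :=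
  Matrix.of fun i j => if j ≤ i then (-1) ^ ((i : ℕ) + j) else 0

def U8 : Matrix (Fin 8) (Fin 8) ℤ :=
  Matrix.of fun i j => if i = 7 ∧ j = 7 then 2 else if j = 7 then (-1) ^ ((i : ℕ) + 1)
    else if i = j then 1 else 0

lemma det_E8 : E8.det = 2 := by
  have h : L8 * E8 = U8 := by decide +kernel
  have h2 := congrArg Matrix.det h
  have hL : L8.det = 1 := by
    rw [Matrix.det_of_isLowerTriangular L8 (fun i j h => by
      have h' : i < j := h
      simp [L8, not_le.mpr h'])]
    decide +kernel
  have hU : U8.det = 2 := by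
    rw [Matrix.det_of_isUpperTriangular (M := U8) (fun i j h => by
      have h' : j < i := h
      have h7 : j ≠ 7 := by omega
      have hij : i ≠ j := by omega
      simp [U8, h7, hij])]
    decide +kernel
  rw [Matrix.det_mul, hL, hU, one_mul] at h2
  exact h2

def T4 : Matrix (Fin 4) (Fin 4) ℤ := !![1,0,2,1; 1,1,0,2; 2,1,1,0; 0,2,1,1]

lemma det_T4 : T4.det = 16 := by decide +kernel

def Y4 (y0 y1 y2 y3 : ℤ) : Matrix (Fin 4) (Fin 4) ℤ :=
  !![y0,-y3,-y2,-y1; y1,y0,-y3,-y2; y2,y1,y0,-y3; y3,y2,y1,y0]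

lemma det_Y4 (y0 y1 y2 y3 : ℤ) : (Y4 y0 y1 y2 y3).det = N ⟨y0, y1, y2, y3⟩ := by
  simp [Y4, Matrix.det_succ_row_zero, Fin.sum_univ_succ, Fin.succAbove, N, cc, dd]
  ring

lemma det_fam8 (k0 k1 k2 k3 : ℤ) :
    (Matrix.of fun i j : Fin (4 + 4) => fam8 k0 k1 k2 k3 (i - j)).det
      = 16 * N ⟨1 + 4 * k0, 1 + 4 * k1, 2 + 4 * k2, 4 * k3⟩ := by
  rw [det_split (n := 4)]
  · rw [← det_T4, ← det_Y4]
    congr 2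
    · ext i j
      fin_cases i <;> fin_cases j <;> simp [fam8, T4, Fin.natAdd, Fin.castAdd, Fin.castLE, Fin.sub_def] <;> ring
    · ext i j
      fin_cases i <;> fin_cases j <;> simp [fam8, Y4, Fin.natAdd, Fin.castAdd, Fin.castLE, Fin.sub_def] <;> ring
  · intro i j
    simp only [Matrix.of_apply]
    congr 1
    revert i j; decide
  · intro i j
    simp only [Matrix.of_apply]
    congr 1
    revert i j; decide

lemma det_fam (k0 k1 k2 k3 : ℤ) : (circMatrix (fam k0 k1 k2 k3)).det
    = 32 * N ⟨1 + 4 * k0, 1 + 4 * k1, 2 + 4 * k2, 4 * k3⟩ := by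
  have h := det_split (n := 8) (circMatrix (fam k0 k1 k2 k3)) ?_ ?_
  · refine h.trans ?_
    have e1 : (Matrix.of fun i j : Fin 8 => circMatrix (fam k0 k1 k2 k3) (Fin.castAdd 8 i) (Fin.castAdd 8 j)
        + circMatrix (fam k0 k1 k2 k3) (Fin.castAdd 8 i) (Fin.natAdd 8 j))
        = Matrix.of fun i j : Fin (4 + 4) => fam8 k0 k1 k2 k3 (i - j) := by
      ext i j
      simp only [Matrix.of_apply, circMatrix]
      rw [← fam_add]
      have hd : ∀ i j : Fin 8,
        ((Fin.castAdd 8 i - Fin.castAdd 8 j : Fin 16) = Fin.castAdd 8 (i - j) ∧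
          (Fin.castAdd 8 i - Fin.natAdd 8 j : Fin 16) = Fin.natAdd 8 (i - j)) ∨
        ((Fin.castAdd 8 i - Fin.castAdd 8 j : Fin 16) = Fin.natAdd 8 (i - j) ∧
          (Fin.castAdd 8 i - Fin.natAdd 8 j : Fin 16) = Fin.castAdd 8 (i - j)) := by decide
      rcases hd i j with ⟨a, b⟩ | ⟨a, b⟩
      · erw [a, b]
      · erw [a, b]; exact add_comm _ _
    have e2 : (Matrix.of fun i j : Fin 8 => circMatrix (fam k0 k1 k2 k3) (Fin.castAdd 8 i) (Fin.castAdd 8 j)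
        - circMatrix (fam k0 k1 k2 k3) (Fin.castAdd 8 i) (Fin.natAdd 8 j)) = E8 := by
      ext i j
      fin_cases i <;> fin_cases j <;> simp [circMatrix, fam, E8, Fin.natAdd, Fin.castAdd, Fin.castLE, Fin.sub_def]
    rw [e1, e2, det_fam8, det_E8]
    ring
  · intro i j
    simp only [circMatrix]
    congr 1
    revert i j; decide
  · intro i j
    simp only [circMatrix]
    congr 1
    revert i j; decide

end C16

theorem sixty_four_p_mem_S16_of_one_mod_eight (p : ℕ) (hp : p.Prime) (h1 : p % 8 = 1)
    (a b : ℤ) (hab : (p : ℤ) = a ^ 2 + b ^ 2)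
    (hsum : a + b ≡ 3 [ZMOD 8] ∨ a + b ≡ -3 [ZMOD 8])
    (hdiff : a - b ≡ 3 [ZMOD 8] ∨ a - b ≡ -3 [ZMOD 8]) :
    (64 * p : ℤ) ∈ S16 := by
  have hs : C16.R3 (a + b) := by unfold C16.R3; unfold Int.ModEq at hsum; omega
  have hd : C16.R3 (a - b) := by unfold C16.R3; unfold Int.ModEq at hdiff; omega
  obtain ⟨x, hx, hc, hdd⟩ := C16.exists_beta p hp h1 a b hab hs hd
  obtain ⟨y, hy, hcy, y0, y1, y2, y3⟩ := C16.step1 x hc hdd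
  obtain ⟨z, hz, z0, z1, z2, z3⟩ := C16.step2 y hcy y0 y1 y2 y3
  obtain ⟨k0, k1, k2, k3, hk⟩ := C16.step3 z z0 z1 z2 z3
  refine ⟨C16.fam k0 k1 k2 k3, ?_⟩
  rw [C16.det_fam, hk, hz, hy, hx]
  ring
end
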